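/- arXiv:1708.03403 — 14 statements merged into one kernel-verified Lean document; each statement's English description precedes it below -/
import Mathlib

section
/- Every SLO is sp-embeddable into the complex algebra of a frame: for every SLO A of signature 𝓡 there exist a frame F of signature 𝓡 and an sp-embedding of A into the complex algebra F*. -/
/-- Strictly positive modal formulas over a signature `Sig`:
propositional variables, `⊤`, conjunction, and a diamond `◇_r` for each `r : Sig`. -/
inductive SP (Sig : Type) : Type
  | var : ℕ → SP Sig
  | top : SP Sig
  | and : SP Sig → SP Sig → SP Sig
  | dia : Sig → SP Sig → SP Sig

/-- An sp-implication `σ → τ` is a pair of sp-formulas. -/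
abbrev SPImp (Sig : Type) := SP Sig × SP Sig

/-- A SLO of signature `Sig`: a meet-semilattice with a greatest element,
equipped with a monotone unary operator for each element of the signature. -/
structure SLO (Sig : Type) where
  carrier : Type
  [instInf : SemilatticeInf carrier]
  [instTop : OrderTop carrier]
  dia : Sig → carrier → carrier
  mono : ∀ r : Sig, Monotone (dia r)

attribute [instance] SLO.instInf SLO.instTop

namespace SLO

variable {Sig : Type}

/-- Evaluation of an sp-formula in a SLO under a valuation of the variables. -/
def eval (A : SLO Sig) (v : ℕ → A.carrier) : SP Sig → A.carrier
  | .var n => v n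
  | .top => ⊤
  | .and φ ψ => eval A v φ ⊓ eval A v ψ
  | .dia r φ => A.dia r (eval A v φ)

/-- A SLO validates an sp-implication `σ → τ` if under every valuation
the value of `σ` is below the value of `τ`. -/
def Valid (A : SLO Sig) (ι : SPImp Sig) : Prop :=
  ∀ v : ℕ → A.carrier, eval A v ι.1 ≤ eval A v ι.2

/-- A SLO validates a set of sp-implications. -/
def ValidSet (A : SLO Sig) (Ax : Set (SPImp Sig)) : Prop :=
  ∀ ι ∈ Ax, Valid A ι

end SLO

/-- A Kripke frame: a nonempty type of worlds with a binary accessibility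
relation for each element of the signature. -/
structure KFrame (Sig : Type) where
  world : Type
  [instNonempty : Nonempty world]
  rel : Sig → world → world → Prop

attribute [instance] KFrame.instNonempty

namespace KFrame

variable {Sig : Type}

/-- Truth of an sp-formula at a world of a Kripke model `(F, v)`. -/
def truth (F : KFrame Sig) (v : ℕ → Set F.world) : SP Sig → F.world → Prop
  | .var n, w => w ∈ v n
  | .top, _ => True
  | .and φ ψ, w => truth F v φ w ∧ truth F v ψ w
  | .dia r φ, w => ∃ u, F.rel r w u ∧ truth F v φ u

/-- A frame validates an sp-implication `σ → τ` if in every Kripke model on it,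
at every world, truth of `σ` implies truth of `τ`. -/
def Valid (F : KFrame Sig) (ι : SPImp Sig) : Prop :=
  ∀ (v : ℕ → Set F.world) (w : F.world), truth F v ι.1 w → truth F v ι.2 w

/-- A frame validates a set of sp-implications. -/
def ValidSet (F : KFrame Sig) (Ax : Set (SPImp Sig)) : Prop :=
  ∀ ι ∈ Ax, Valid F ι

/-- The complex algebra `F*` of a frame, as a SLO: all subsets of the worlds,
with intersection as meet, the whole set as `⊤`, and
`◇_r X = {w | ∃ u ∈ X, rel r w u}`. -/
def cmpl (F : KFrame Sig) : SLO Sig where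
  carrier := Set F.world
  dia r X := {w | ∃ u ∈ X, F.rel r w u}
  mono r := by
    intro X Y hXY w hw
    obtain ⟨u, hu, hr⟩ := hw
    exact ⟨u, hXY hu, hr⟩

end KFrame

/-- An sp-embedding between SLOs: an injective map preserving `⊤`,
binary meets, and each operator. -/
def IsSpEmbedding {Sig : Type} (A B : SLO Sig) (η : A.carrier → B.carrier) : Prop :=
  Function.Injective η ∧ η ⊤ = ⊤ ∧
    (∀ a b : A.carrier, η (a ⊓ b) = η a ⊓ η b) ∧
    ∀ (r : Sig) (a : A.carrier), η (A.dia r a) = B.dia r (η a)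

/-- `Ax ⊨_Kr ι`: every frame validating every member of `Ax` validates `ι`. -/
def KrCons {Sig : Type} (Ax : Set (SPImp Sig)) (ι : SPImp Sig) : Prop :=
  ∀ F : KFrame Sig, F.ValidSet Ax → F.Valid ι

/-- `Ax ⊨_SLO ι`: every SLO validating every member of `Ax` validates `ι`. -/
def SLOCons {Sig : Type} (Ax : Set (SPImp Sig)) (ι : SPImp Sig) : Prop :=
  ∀ A : SLO Sig, A.ValidSet Ax → A.Valid ι

/-- The spi-logic axiomatised by `Ax` is complete:
`Ax ⊨_Kr ι` iff `Ax ⊨_SLO ι` for every sp-implication `ι`. -/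
def IsCompleteLogic {Sig : Type} (Ax : Set (SPImp Sig)) : Prop :=
  ∀ ι : SPImp Sig, KrCons Ax ι ↔ SLOCons Ax ι

/-- The spi-logic axiomatised by `Ax` is complex: every SLO validating every
member of `Ax` sp-embeds into the complex algebra of some frame validating
every member of `Ax`. -/
def IsComplexLogic {Sig : Type} (Ax : Set (SPImp Sig)) : Prop :=
  ∀ A : SLO Sig, A.ValidSet Ax →
    ∃ F : KFrame Sig, F.ValidSet Ax ∧
      ∃ η : A.carrier → (KFrame.cmpl F).carrier, IsSpEmbedding A (KFrame.cmpl F) η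

/-- The unimodal diamond. -/
def SP.d (φ : SP Unit) : SP Unit := SP.dia () φ

/-- `p → ◇p` (reflexivity). -/
def e_refl : SPImp Unit := (SP.var 0, (SP.var 0).d)

/-- `◇◇p → ◇p` (transitivity). -/
def e_trans : SPImp Unit := (((SP.var 0).d).d, (SP.var 0).d)

/-- `q ∧ ◇p → ◇(p ∧ ◇q)` (symmetry). -/
def e_sym : SPImp Unit :=
  ((SP.var 1).and ((SP.var 0).d), ((SP.var 0).and ((SP.var 1).d)).d)

/-- Every SLO is sp-embeddable into the complex algebra of a frame. -/
theorem every_SLO_embeddable {Sig : Type} (A : SLO Sig) :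
    ∃ F : KFrame Sig,
      ∃ η : A.carrier → (KFrame.cmpl F).carrier, IsSpEmbedding A (KFrame.cmpl F) η := by
  refine ⟨{ world := A.carrier, instNonempty := ⟨⊤⟩, rel := fun r w u => w ≤ A.dia r u },
    fun a => ({w : A.carrier | w ≤ a} : Set A.carrier), ?_, ?_, ?_, ?_⟩
  · intro a b h
    have h' : ({w : A.carrier | w ≤ a} : Set A.carrier) = {w | w ≤ b} := h
    have h1 : a ∈ ({w : A.carrier | w ≤ b} : Set A.carrier) := h' ▸ le_refl a
    have h2 : b ∈ ({w : A.carrier | w ≤ a} : Set A.carrier) := h' ▸ le_refl b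
    exact le_antisymm h1 h2
  · exact Set.eq_univ_of_forall (fun w => (le_top : w ≤ (⊤ : A.carrier)))
  · intro a b
    exact Set.ext (fun w => (le_inf_iff : w ≤ a ⊓ b ↔ w ≤ a ∧ w ≤ b))
  · intro r a
    refine Set.ext (fun w => ⟨fun hw => ⟨a, le_refl a, hw⟩, ?_⟩)
    rintro ⟨u, hu, hr⟩
    exact le_trans hr (A.mono r hu)
end

section
/- The spi-logic axiomatised by the empty set of sp-implications is complete: for every sp-implication ι of signature 𝓡, ι is validated by every frame of signature 𝓡 if and only if ι is validated by every SLO of signature 𝓡. -/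
/-- The frame of a SLO: `a` sees `b` if `a ≤ ◇ b`. -/
def sloFrame {Sig : Type} (A : SLO Sig) : KFrame Sig :=
  @KFrame.mk Sig A.carrier ⟨⊤⟩ (fun r a b => a ≤ A.dia r b)

theorem sloFrame_truth {Sig : Type} (A : SLO Sig) (v : ℕ → A.carrier) (φ : SP Sig) :
    ∀ a : A.carrier,
      (sloFrame A).truth (fun n => {b : A.carrier | b ≤ v n}) φ a ↔ a ≤ A.eval v φ := by
  induction φ with
  | var n => intro a; exact Iff.rfl
  | top => intro a; exact ⟨fun _ => le_top, fun _ => trivial⟩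
  | and φ ψ h1 h2 =>
    intro a
    exact (and_congr (h1 a) (h2 a)).trans le_inf_iff.symm
  | dia r φ h =>
    intro a
    constructor
    · rintro ⟨u, hu, ht⟩
      exact le_trans hu (A.mono r ((h u).1 ht))
    · intro ha
      exact ⟨A.eval v φ, ha, (h _).2 le_rfl⟩

theorem cmpl_eval {Sig : Type} (F : KFrame Sig) (v : ℕ → Set F.world) (φ : SP Sig) :
    ∀ w : F.world, F.truth v φ w ↔ w ∈ (show Set F.world from F.cmpl.eval v φ) := by
  induction φ with
  | var n => intro a; exact Iff.rfl
  | top => intro a; exact ⟨fun _ => Set.mem_univ a, fun _ => trivial⟩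
  | and φ ψ h1 h2 =>
    intro a
    exact and_congr (h1 a) (h2 a)
  | dia r φ h =>
    intro a
    constructor
    · rintro ⟨u, hu, ht⟩
      exact ⟨u, (h u).1 ht, hu⟩
    · rintro ⟨u, ht, hu⟩
      exact ⟨u, hu, (h u).2 ht⟩

/-- The spi-logic axiomatised by the empty set of sp-implications is
complete: for every sp-implication `ι`, `ι` is validated by every frame iff it is
validated by every SLO. -/
theorem spi_empty_complete {Sig : Type} : IsCompleteLogic (∅ : Set (SPImp Sig)) := by
  intro ι
  constructor
  · intro h A _ v
    have := h (sloFrame A) (fun _ hι => absurd hι (Set.notMem_empty _))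
      (fun n => {b : A.carrier | b ≤ v n}) (A.eval v ι.1)
    exact (sloFrame_truth A v ι.2 _).1 (this ((sloFrame_truth A v ι.1 _).2 le_rfl))
  · intro h F _ v w hw
    have h1 := h F.cmpl (fun _ hι => absurd hι (Set.notMem_empty _)) v
    exact (cmpl_eval F v ι.2 w).2 (h1 ((cmpl_eval F v ι.1 w).1 hw))
end

section
/- If the spi-logic axiomatised by a set Σ of sp-implications is complex and Σ₀ is a set of variable-free sp-implications, then the spi-logic axiomatised by Σ ∪ Σ₀ is complex. -/
/-- An sp-formula is variable-free if it contains no propositional variables. -/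
def SP.VarFree {Sig : Type} : SP Sig → Prop
  | .var _ => False
  | .top => True
  | .and φ ψ => φ.VarFree ∧ ψ.VarFree
  | .dia _ φ => φ.VarFree

theorem truth_iff_mem_of_varFree {Sig : Type} (A : SLO Sig) (F : KFrame Sig)
    (η : A.carrier → (KFrame.cmpl F).carrier) (hη : IsSpEmbedding A (KFrame.cmpl F) η)
    (v : ℕ → Set F.world) (u : ℕ → A.carrier) (φ : SP Sig) (hφ : φ.VarFree) :
    ∀ w : F.world, F.truth v φ w ↔ (η (A.eval u φ) : Set F.world) w := by
  obtain ⟨-, ht, hm, hd⟩ := hη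
  induction φ with
  | var n => exact hφ.elim
  | top =>
    intro w
    simp only [SLO.eval, KFrame.truth, ht]
    exact ⟨fun _ => trivial, fun _ => trivial⟩
  | and φ ψ ih1 ih2 =>
    intro w
    simp only [SLO.eval, KFrame.truth, hm]
    rw [ih1 hφ.1, ih2 hφ.2]
    exact Iff.rfl
  | dia r φ ih =>
    intro w
    simp only [SLO.eval, KFrame.truth, hd]
    constructor
    · rintro ⟨x, hr, hx⟩
      exact ⟨x, (ih hφ x).1 hx, hr⟩
    · rintro ⟨x, hx, hr⟩
      exact ⟨x, hr, (ih hφ x).2 hx⟩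

/-- If the spi-logic axiomatised by `Ax` is complex and `Ax0` is a set of
variable-free sp-implications, then the spi-logic axiomatised by `Ax ∪ Ax0` is complex. -/
theorem complex_union_varfree {Sig : Type} (Ax Ax0 : Set (SPImp Sig))
    (hAx : IsComplexLogic Ax) (h0 : ∀ ι ∈ Ax0, ι.1.VarFree ∧ ι.2.VarFree) :
    IsComplexLogic (Ax ∪ Ax0) := by
  intro A hA
  obtain ⟨F, hF, η, hη⟩ := hAx A (fun ι h => hA ι (Or.inl h))
  refine ⟨F, ?_, η, hη⟩
  rintro ι (h | h)
  · exact hF ι h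
  · intro v w hw
    have hv := hA ι (Or.inr h) (fun _ => ⊤)
    have h1 := (truth_iff_mem_of_varFree A F η hη v (fun _ => ⊤) ι.1 (h0 ι h).1 w).1 hw
    refine (truth_iff_mem_of_varFree A F η hη v (fun _ => ⊤) ι.2 (h0 ι h).2 w).2 ?_
    have hm := hη.2.2.1 (A.eval (fun _ => ⊤) ι.1) (A.eval (fun _ => ⊤) ι.2)
    rw [inf_eq_left.2 hv] at hm
    rw [hm] at h1
    exact h1.2
end

section
/- Any spi-logic axiomatised by sp-implications of the form ◇_{R₁}⋯◇_{Rₙ} p → ◇_{R₀} p (n ≥ 0, R₀,…,Rₙ ∈ 𝓡, p a propositional variable) is complex, and hence complete. In particular, the spi-logics axiomatised by {p → ◇p}, by {◇◇p → ◇p}, and by Ec_qo = {p → ◇p, ◇◇p → ◇p} are complex and complete. -/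
/-- `diaList [R₁, …, Rₙ] φ = ◇_{R₁} ⋯ ◇_{Rₙ} φ`. -/
def diaList {Sig : Type} : List Sig → SP Sig → SP Sig
  | [], φ => φ
  | r :: L, φ => SP.dia r (diaList L φ)

theorem my_eval_cmpl {Sig : Type} (F : KFrame Sig) (v : ℕ → Set F.world) (φ : SP Sig) :
    ∀ w, w ∈ (show Set F.world from SLO.eval F.cmpl v φ) ↔ F.truth v φ w := by
  induction φ with
  | var n => intro w; exact Iff.rfl
  | top => intro w; exact iff_of_true (Set.mem_univ w) trivial
  | and φ ψ h1 h2 => intro w; exact and_congr (h1 w) (h2 w)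
  | dia r φ h =>
    intro w
    constructor
    · rintro ⟨u, hu, hr⟩
      exact ⟨u, hr, (h u).1 hu⟩
    · rintro ⟨u, hr, hu⟩
      exact ⟨u, (h u).2 hu, hr⟩

theorem my_valid_cmpl {Sig : Type} (F : KFrame Sig) (ι : SPImp Sig) :
    F.cmpl.Valid ι ↔ F.Valid ι := by
  constructor
  · intro h v w hw
    exact (my_eval_cmpl F v _ w).1 (h v ((my_eval_cmpl F v _ w).2 hw))
  · intro h v w hw
    exact (my_eval_cmpl F v _ w).2 (h v w ((my_eval_cmpl F v _ w).1 hw))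

theorem my_eval_emb {Sig : Type} {A B : SLO Sig} {η : A.carrier → B.carrier}
    (h : IsSpEmbedding A B η) (v : ℕ → A.carrier) (φ : SP Sig) :
    η (A.eval v φ) = B.eval (fun n => η (v n)) φ := by
  obtain ⟨_, ht, hm, hd⟩ := h
  induction φ with
  | var n => rfl
  | top => exact ht
  | and φ ψ h1 h2 => simp only [SLO.eval, hm, h1, h2]
  | dia r φ h => simp only [SLO.eval, hd, h]

theorem my_complete {Sig : Type} {Ax : Set (SPImp Sig)} (h : IsComplexLogic Ax) :
    IsCompleteLogic Ax := by
  intro ι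
  constructor
  · intro hk A hA v
    obtain ⟨F, hF, η, hη⟩ := h A hA
    have h1 := (my_valid_cmpl F ι).2 (hk F hF) (fun n => η (v n))
    rw [← my_eval_emb hη, ← my_eval_emb hη] at h1
    have h2 := inf_eq_left.2 h1
    rw [← hη.2.2.1] at h2
    exact inf_eq_left.1 (hη.1 h2)
  · intro hs F hF
    exact (my_valid_cmpl F ι).1 (hs _ fun j hj => (my_valid_cmpl F j).2 (hF j hj))

def myFrame {Sig : Type} (A : SLO Sig) : KFrame Sig where
  world := A.carrier
  instNonempty := ⟨⊤⟩
  rel r w u := w ≤ A.dia r u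

theorem my_chain {Sig : Type} (A : SLO Sig) (v : ℕ → Set A.carrier) (p : ℕ) (L : List Sig) :
    ∀ w : A.carrier, (myFrame A).truth v (diaList L (SP.var p)) w →
      ∃ u : A.carrier, u ∈ v p ∧ w ≤ A.eval (fun _ => u) (diaList L (SP.var p)) := by
  induction L with
  | nil => intro w hw; exact ⟨w, hw, le_refl w⟩
  | cons r L ih =>
    rintro w ⟨x, hx, hx2⟩
    obtain ⟨u, hu, hle⟩ := ih x hx2
    exact ⟨u, hu, le_trans (show w ≤ A.dia r x from hx) (A.mono r hle)⟩

theorem my_complex {Sig : Type} (Ax : Set (SPImp Sig))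
    (h : ∀ ι ∈ Ax, ∃ (L : List Sig) (r₀ : Sig) (p : ℕ),
            ι = (diaList L (SP.var p), SP.dia r₀ (SP.var p))) : IsComplexLogic Ax := by
  intro A hA
  refine ⟨myFrame A, ?_, fun a => {w : A.carrier | w ≤ a}, ?_, ?_, ?_, ?_⟩
  · intro ι hι v w hw
    have h1 := hA ι hι
    obtain ⟨L, r₀, p, rfl⟩ := h ι hι
    obtain ⟨u, hu, hle⟩ := my_chain A v p L w hw
    exact ⟨u, le_trans hle (h1 fun _ => u), hu⟩
  · intro a b hab
    have h2 : ∀ w : A.carrier, w ≤ a ↔ w ≤ b := fun w => Set.ext_iff.1 hab w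
    exact le_antisymm ((h2 a).1 le_rfl) ((h2 b).2 le_rfl)
  · exact Set.eq_univ_of_forall fun w => (le_top : (show A.carrier from w) ≤ ⊤)
  · intro a b
    exact Set.ext fun w => (le_inf_iff : (show A.carrier from w) ≤ a ⊓ b ↔ _)
  · intro r a
    refine Set.ext fun w => ⟨fun hw => ⟨a, le_refl a, hw⟩, ?_⟩
    rintro ⟨u, hu, hr⟩
    exact le_trans (show (show A.carrier from w) ≤ A.dia r u from hr) (A.mono r hu)

/-- Any spi-logic axiomatised by sp-implications of the form
`◇_{R₁}⋯◇_{Rₙ} p → ◇_{R₀} p` (n ≥ 0) is complex, and hence complete.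
In particular, the spi-logics axiomatised by `{p → ◇p}`, by `{◇◇p → ◇p}`,
and by `Ec_qo = {p → ◇p, ◇◇p → ◇p}` are complex and complete. -/
theorem stmt3 :
    (∀ (Sig : Type) (Ax : Set (SPImp Sig)),
        (∀ ι ∈ Ax, ∃ (L : List Sig) (r₀ : Sig) (p : ℕ),
            ι = (diaList L (SP.var p), SP.dia r₀ (SP.var p))) →
        IsComplexLogic Ax ∧ IsCompleteLogic Ax) ∧
    (IsComplexLogic ({e_refl} : Set (SPImp Unit)) ∧
      IsCompleteLogic ({e_refl} : Set (SPImp Unit))) ∧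
    (IsComplexLogic ({e_trans} : Set (SPImp Unit)) ∧
      IsCompleteLogic ({e_trans} : Set (SPImp Unit))) ∧
    (IsComplexLogic ({e_refl, e_trans} : Set (SPImp Unit)) ∧
      IsCompleteLogic ({e_refl, e_trans} : Set (SPImp Unit))) := by
  have key : ∀ (Sig : Type) (Ax : Set (SPImp Sig)),
        (∀ ι ∈ Ax, ∃ (L : List Sig) (r₀ : Sig) (p : ℕ),
            ι = (diaList L (SP.var p), SP.dia r₀ (SP.var p))) →
        IsComplexLogic Ax ∧ IsCompleteLogic Ax :=
    fun Sig Ax h => ⟨my_complex Ax h, my_complete (my_complex Ax h)⟩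
  refine ⟨key, key _ _ ?_, key _ _ ?_, key _ _ ?_⟩
  · rintro ι rfl
    exact ⟨[], (), 0, rfl⟩
  · rintro ι rfl
    exact ⟨[(), ()], (), 0, rfl⟩
  · rintro ι (rfl | rfl)
    · exact ⟨[], (), 0, rfl⟩
    · exact ⟨[(), ()], (), 0, rfl⟩
end

section
/- The unimodal spi-logic axiomatised by {e_sym}, where e_sym = (q ∧ ◇p → ◇(p ∧ ◇q)), is complex (and hence complete): every SLO validating e_sym admits an sp-embedding into F* for some frame F with a symmetric relation (equivalently, some frame validating e_sym). -/
/-- The unimodal spi-logic axiomatised by `{e_sym}` is complex: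
every SLO validating `e_sym` sp-embeds into `F*` for some frame with a symmetric
relation (equivalently, some frame validating `e_sym`). -/
theorem stmt5 (A : SLO Unit) (hA : A.Valid e_sym) :
    ∃ F : KFrame Unit, Symmetric (F.rel ()) ∧ F.Valid e_sym ∧
      ∃ η : A.carrier → (KFrame.cmpl F).carrier, IsSpEmbedding A (KFrame.cmpl F) η := by
  have key : ∀ p q : A.carrier, q ⊓ A.dia () p ≤ A.dia () (p ⊓ A.dia () q) := by
    intro p q
    exact hA (fun n => if n = 0 then p else q)
  let W : Type := {S : Set A.carrier // ⊤ ∈ S ∧ (∀ a b, a ∈ S → b ∈ S → a ⊓ b ∈ S) ∧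
    ∀ a b, a ≤ b → a ∈ S → b ∈ S}
  let P : A.carrier → W := fun a =>
    ⟨{x | a ≤ x}, le_top, fun _ _ hx hy => le_inf hx hy, fun _ _ h hx => le_trans hx h⟩
  haveI : Nonempty W := ⟨P ⊤⟩
  let R : W → W → Prop := fun S T =>
    (∀ a ∈ T.1, A.dia () a ∈ S.1) ∧ (∀ a ∈ S.1, A.dia () a ∈ T.1)
  have hsym : ∀ S T, R S T → R T S := fun S T h => ⟨h.2, h.1⟩
  refine ⟨{ world := W, rel := fun _ => R }, fun S T h => hsym S T h, ?_, ?_⟩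
  · rintro v w ⟨hq, u, hwu, hp⟩
    exact ⟨u, hwu, hp, w, hsym _ _ hwu, hq⟩
  · refine ⟨fun a => {S : W | a ∈ S.1}, ?_, ?_, ?_, ?_⟩
    · intro a b hab
      have h : ∀ S : W, a ∈ S.1 ↔ b ∈ S.1 := fun S => Set.ext_iff.1 hab S
      exact le_antisymm ((h (P a)).1 (le_refl a)) ((h (P b)).2 (le_refl b))
    · exact Set.eq_univ_of_forall fun S : W => S.2.1
    · intro a b
      refine Set.ext fun S : W => ⟨fun h => ⟨?_, ?_⟩, fun h => S.2.2.1 a b h.1 h.2⟩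
      · exact S.2.2.2 _ _ inf_le_left h
      · exact S.2.2.2 _ _ inf_le_right h
    · rintro ⟨⟩ p
      refine Set.ext fun S : W => ⟨fun h => ?_, ?_⟩
      · have h' : A.dia () p ∈ S.1 := h
        let T : W := ⟨{x | ∃ a ∈ S.1, p ⊓ A.dia () a ≤ x}, ⟨⊤, S.2.1, le_top⟩, by
          rintro x y ⟨a, ha, hx⟩ ⟨b, hb, hy⟩
          refine ⟨a ⊓ b, S.2.2.1 a b ha hb, le_inf ?_ ?_⟩
          · exact le_trans (inf_le_inf_left p (A.mono () inf_le_left)) hx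
          · exact le_trans (inf_le_inf_left p (A.mono () inf_le_right)) hy, by
          rintro x y hxy ⟨a, ha, hx⟩
          exact ⟨a, ha, hx.trans hxy⟩⟩
        have hpT : p ∈ T.1 := ⟨⊤, S.2.1, inf_le_left⟩
        have hR : R S T := by
          refine ⟨?_, fun a ha => ⟨a, ha, inf_le_right⟩⟩
          rintro x ⟨a, ha, hx⟩
          exact S.2.2.2 _ _ ((key p a).trans (A.mono () hx)) (S.2.2.1 _ _ ha h')
        exact ⟨T, hpT, hR⟩
      · rintro ⟨T, hT, hR⟩
        exact hR.1 p hT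
end

section
/- The unimodal spi-logic SPi_equiv axiomatised by Ec_equiv = {e_refl, e_trans, e_sym} is complex (and hence complete): every SLO validating Ec_equiv admits an sp-embedding into F* for some frame whose relation is an equivalence relation. Moreover, Ec_equiv and Ec_equiv' = {e_refl, e_trans, e_eucl} have exactly the same SLO-consequences, where e_eucl = (◇p ∧ ◇q → ◇(p ∧ ◇q)). -/
/-- `◇p ∧ ◇q → ◇(p ∧ ◇q)` (Euclideanness). -/
def e_eucl : SPImp Unit :=
  (((SP.var 0).d).and ((SP.var 1).d), ((SP.var 0).and ((SP.var 1).d)).d)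

def Ec_equiv : Set (SPImp Unit) := {e_refl, e_trans, e_sym}

def Ec_equiv' : Set (SPImp Unit) := {e_refl, e_trans, e_eucl}

theorem valid_refl_iff (A : SLO Unit) :
    A.Valid e_refl ↔ ∀ a : A.carrier, a ≤ A.dia () a :=
  ⟨fun h a => h (fun _ => a), fun h v => h (v 0)⟩

theorem valid_trans_iff (A : SLO Unit) :
    A.Valid e_trans ↔ ∀ a : A.carrier, A.dia () (A.dia () a) ≤ A.dia () a :=
  ⟨fun h a => h (fun _ => a), fun h v => h (v 0)⟩

theorem valid_sym_iff (A : SLO Unit) :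
    A.Valid e_sym ↔ ∀ p q : A.carrier, q ⊓ A.dia () p ≤ A.dia () (p ⊓ A.dia () q) :=
  ⟨fun h p q => h (fun n => if n = 0 then p else q), fun h v => h (v 0) (v 1)⟩

theorem valid_eucl_iff (A : SLO Unit) :
    A.Valid e_eucl ↔
      ∀ p q : A.carrier, A.dia () p ⊓ A.dia () q ≤ A.dia () (p ⊓ A.dia () q) :=
  ⟨fun h p q => h (fun n => if n = 0 then p else q), fun h v => h (v 0) (v 1)⟩

theorem validSet_equiv_iff (A : SLO Unit) :
    A.ValidSet Ec_equiv ↔ A.Valid e_refl ∧ A.Valid e_trans ∧ A.Valid e_sym := by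
  simp [SLO.ValidSet, Ec_equiv]

theorem validSet_equiv_iff' (A : SLO Unit) :
    A.ValidSet Ec_equiv' ↔ A.Valid e_refl ∧ A.Valid e_trans ∧ A.Valid e_eucl := by
  simp [SLO.ValidSet, Ec_equiv']

theorem validSet_iff (A : SLO Unit) : A.ValidSet Ec_equiv ↔ A.ValidSet Ec_equiv' := by
  rw [validSet_equiv_iff, validSet_equiv_iff', valid_refl_iff, valid_trans_iff,
    valid_sym_iff, valid_eucl_iff]
  constructor
  · rintro ⟨hr, ht, hs⟩
    refine ⟨hr, ht, fun p q => ?_⟩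
    rw [inf_comm]
    exact (hs p (A.dia () q)).trans (A.mono () (inf_le_inf_left p (ht q)))
  · rintro ⟨hr, ht, he⟩
    refine ⟨hr, ht, fun p q => ?_⟩
    rw [inf_comm]
    exact (inf_le_inf_left _ (hr q)).trans (he p q)

/-- `SPi_equiv` (axiomatised by `Ec_equiv`) is complex: every SLO
validating `Ec_equiv` sp-embeds into `F*` for some frame whose relation is an
equivalence relation. Moreover, `Ec_equiv` and `Ec_equiv'` have exactly the same
SLO-consequences. -/
theorem stmt6 :
    (∀ A : SLO Unit, A.ValidSet Ec_equiv →
      ∃ F : KFrame Unit, Equivalence (F.rel ()) ∧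
        ∃ η : A.carrier → (KFrame.cmpl F).carrier, IsSpEmbedding A (KFrame.cmpl F) η) ∧
    (∀ ι : SPImp Unit, SLOCons Ec_equiv ι ↔ SLOCons Ec_equiv' ι) := by
  refine ⟨fun A hA => ?_, fun ι => forall_congr' fun A => by rw [validSet_iff]⟩
  rw [validSet_equiv_iff, valid_refl_iff, valid_trans_iff, valid_sym_iff] at hA
  obtain ⟨hr, ht, hs⟩ := hA
  haveI : Nonempty A.carrier := ⟨⊤⟩
  refine ⟨{ world := A.carrier, rel := fun _ w u => A.dia () w = A.dia () u },
    ⟨fun _ => rfl, fun h => h.symm, fun h k => h.trans k⟩,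
    fun a => {w : A.carrier | w ≤ a}, ?_, ?_, ?_, ?_⟩
  · intro a b hab
    have h : ∀ w : A.carrier, w ≤ a ↔ w ≤ b := fun w => Set.ext_iff.mp hab w
    exact le_antisymm ((h a).1 le_rfl) ((h b).2 le_rfl)
  · exact Set.ext fun w => ⟨fun _ => trivial, fun _ => (le_top : w ≤ (⊤ : A.carrier))⟩
  · intro a b
    exact Set.ext fun w => (le_inf_iff : w ≤ a ⊓ b ↔ _)
  · rintro ⟨⟩ a
    refine Set.ext fun (w : A.carrier) => ⟨fun (hw : w ≤ A.dia () a) => ?_, ?_⟩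
    · refine ⟨a ⊓ A.dia () w, (inf_le_left : a ⊓ A.dia () w ≤ a), ?_⟩
      change A.dia () w = A.dia () (a ⊓ A.dia () w)
      refine le_antisymm ?_ ((A.mono () inf_le_right).trans (ht w))
      exact (A.mono () ((le_inf le_rfl hw).trans (hs a w))).trans (ht _)
    · rintro ⟨u, hu, hwu⟩
      have hu' : u ≤ a := hu
      have hwu' : A.dia () w = A.dia () u := hwu
      change w ≤ A.dia () a
      exact ((hr w).trans hwu'.le).trans (A.mono () hu')
end

section
/- The unimodal spi-logic axiomatised by {p → ◇p, ◇p → p} is complex (and hence complete): every SLO validating both p → ◇p and ◇p → p admits an sp-embedding into F* for some frame validating both, equivalently, some frame whose relation is the equality relation on its set of points. -/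
/-- `◇p → p`. -/
def e_dp : SPImp Unit := ((SP.var 0).d, SP.var 0)

/-- The unimodal spi-logic axiomatised by `{p → ◇p, ◇p → p}` is complex:
every SLO validating both sp-embeds into `F*` for some frame validating both,
equivalently, some frame whose relation is the equality relation on its points. -/
theorem stmt7 (A : SLO Unit) (h1 : A.Valid e_refl) (h2 : A.Valid e_dp) :
    ∃ F : KFrame Unit, (∀ x y : F.world, F.rel () x y ↔ x = y) ∧
      F.Valid e_refl ∧ F.Valid e_dp ∧
      ∃ η : A.carrier → (KFrame.cmpl F).carrier, IsSpEmbedding A (KFrame.cmpl F) η := by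
  have hd : ∀ a : A.carrier, A.dia () a = a := fun a =>
    le_antisymm (h2 fun _ => a) (h1 fun _ => a)
  refine ⟨{ world := A.carrier, instNonempty := ⟨⊤⟩, rel := fun _ x y => x = y },
    fun x y => Iff.rfl, ?_, ?_, fun a => {x : A.carrier | x ≤ a}, ?_, ?_, ?_, ?_⟩
  · intro v w h
    exact ⟨w, rfl, h⟩
  · rintro v w ⟨u, hu, h⟩
    change w = u at hu
    subst hu
    exact h
  · intro a b h
    have h' : ∀ x : A.carrier, x ≤ a ↔ x ≤ b := fun x => Set.ext_iff.mp h x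
    exact le_antisymm ((h' a).1 le_rfl) ((h' b).2 le_rfl)
  · exact Set.eq_univ_of_forall fun x : A.carrier => (le_top : x ≤ ⊤)
  · intro a b
    exact Set.ext fun x : A.carrier => (le_inf_iff : x ≤ a ⊓ b ↔ x ≤ a ∧ x ≤ b)
  · intro r a
    have e : A.dia r a = a := hd a
    rw [e]
    refine Set.ext fun x : A.carrier => ⟨fun h => ⟨x, h, rfl⟩, ?_⟩
    rintro ⟨u, hu, h⟩
    change x = u at h
    subst h
    exact hu
end

section
/- The unimodal spi-logic axiomatised by {e_fun}, where e_fun = (◇p ∧ ◇q → ◇(p ∧ q)), is complex (and hence complete): every SLO validating e_fun admits an sp-embedding into F* for some frame F with a functional relation (i.e., satisfying ∀x,y,z (R(x,y) ∧ R(x,z) → y = z); equivalently, some frame validating e_fun). -/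
/-- `◇p ∧ ◇q → ◇(p ∧ q)` (functionality). -/
def e_fun : SPImp Unit :=
  (((SP.var 0).d).and ((SP.var 1).d), ((SP.var 0).and (SP.var 1)).d)

/-- The unimodal spi-logic axiomatised by `{e_fun}` is complex:
every SLO validating `e_fun` sp-embeds into `F*` for some frame `F` with a
functional relation (equivalently, some frame validating `e_fun`). -/
theorem stmt8 (A : SLO Unit) (hA : A.Valid e_fun) :
    ∃ F : KFrame Unit,
      (∀ x y z : F.world, F.rel () x y → F.rel () x z → y = z) ∧
      F.Valid e_fun ∧
      ∃ η : A.carrier → (KFrame.cmpl F).carrier, IsSpEmbedding A (KFrame.cmpl F) η := by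
  have hf : ∀ a b : A.carrier, A.dia () a ⊓ A.dia () b ≤ A.dia () (a ⊓ b) := by
    intro a b
    exact hA (fun n => if n = 0 then a else b)
  let W := {s : Set A.carrier // ⊤ ∈ s ∧ (∀ a b, a ∈ s → a ≤ b → b ∈ s) ∧
    ∀ a b, a ∈ s → b ∈ s → a ⊓ b ∈ s}
  let pr : A.carrier → W := fun a => ⟨{b | a ≤ b}, le_top,
    fun _ _ h h' => le_trans h h', fun _ _ h h' => le_inf h h'⟩
  let F : KFrame Unit :=
    { world := W
      instNonempty := ⟨pr ⊤⟩
      rel := fun _ x y => (∃ b, A.dia () b ∈ x.1) ∧ y.1 = {a | A.dia () a ∈ x.1} }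
  have hfun : ∀ x y z : F.world, F.rel () x y → F.rel () x z → y = z := by
    intro x y z h1 h2
    exact Subtype.ext (h1.2.trans h2.2.symm)
  refine ⟨F, hfun, ?_, fun a => {x : W | a ∈ x.1}, ?_, ?_, ?_, ?_⟩
  · rintro v w ⟨⟨u, hu, h0⟩, ⟨u', hu', h1⟩⟩
    have e := hfun w u u' hu hu'
    subst e
    exact ⟨u, hu, h0, h1⟩
  · intro a b hab
    have h : ∀ x : W, a ∈ x.1 ↔ b ∈ x.1 := fun x => Set.ext_iff.mp hab x
    exact le_antisymm ((h (pr a)).1 (le_refl a)) ((h (pr b)).2 (le_refl b))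
  · exact Set.eq_univ_of_forall fun x : W => x.2.1
  · intro a b
    refine Set.ext fun x : W => ⟨fun h => ⟨?_, ?_⟩, fun h => x.2.2.2 _ _ h.1 h.2⟩
    · exact x.2.2.1 _ _ h inf_le_left
    · exact x.2.2.1 _ _ h inf_le_right
  · intro r a
    refine Set.ext fun x : W => ⟨fun h => ?_, ?_⟩
    · have h : A.dia () a ∈ x.1 := h
      refine ⟨(⟨{c | A.dia () c ∈ x.1}, ?_, ?_, ?_⟩ : W), h, ⟨a, h⟩, rfl⟩
      · exact x.2.2.1 _ _ h (A.mono () le_top)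
      · intro c d hc hcd
        exact x.2.2.1 _ _ hc (A.mono () hcd)
      · intro c d hc hd
        exact x.2.2.1 _ _ (x.2.2.2 _ _ hc hd) (hf c d)
    · rintro ⟨u, hu, _, he⟩
      have hu : a ∈ u.1 := hu
      rw [he] at hu
      exact hu
end

section
/- The unimodal spi-logic axiomatised by Ec_qo ∪ {e_fun} = {p → ◇p, ◇◇p → ◇p, ◇p ∧ ◇q → ◇(p ∧ q)} is not complete: every frame validating these three sp-implications validates ◇p → p (so Ec_qo ∪ {e_fun} ⊨_Kr ◇p → p), yet there is a (three-element) SLO validating all three that does not validate ◇p → p (so Ec_qo ∪ {e_fun} ⊭_SLO ◇p → p). -/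
/-- The unimodal spi-logic axiomatised by
`Ec_qo ∪ {e_fun} = {p → ◇p, ◇◇p → ◇p, ◇p ∧ ◇q → ◇(p ∧ q)}` is not complete:
every frame validating these three sp-implications validates `◇p → p`,
yet there is a SLO validating all three that does not validate `◇p → p`. -/
theorem stmt9 :
    KrCons ({e_refl, e_trans, e_fun} : Set (SPImp Unit)) e_dp ∧
    (∃ A : SLO Unit, A.ValidSet ({e_refl, e_trans, e_fun} : Set (SPImp Unit)) ∧
      ¬ A.Valid e_dp) ∧
    ¬ SLOCons ({e_refl, e_trans, e_fun} : Set (SPImp Unit)) e_dp ∧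
    ¬ IsCompleteLogic ({e_refl, e_trans, e_fun} : Set (SPImp Unit)) := by
  have hK : KrCons ({e_refl, e_trans, e_fun} : Set (SPImp Unit)) e_dp := by
    intro F hF v w hw
    have hr := hF e_refl (by simp)
    have hf := hF e_fun (by simp)
    obtain ⟨u, hwu, hu⟩ := hw
    obtain ⟨x, hwx, hx⟩ := hr (fun _ => {w}) w rfl
    have hxw : x = w := hx
    subst hxw
    obtain ⟨y, _, hy1, hy2⟩ := hf (fun n => if n = 0 then {x} else {u}) x
      ⟨⟨x, hwx, by simp [KFrame.truth]⟩, ⟨u, hwu, by simp [KFrame.truth]⟩⟩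
    simp [KFrame.truth] at hy1 hy2
    have hux : x = u := hy1.symm.trans hy2
    rw [← hux] at hu
    exact hu
  have hA : ∃ A : SLO Unit, A.ValidSet ({e_refl, e_trans, e_fun} : Set (SPImp Unit)) ∧
      ¬ A.Valid e_dp := by
    refine ⟨{ carrier := Prop, dia := fun _ _ => ⊤, mono := fun _ _ _ _ => le_rfl }, ?_, ?_⟩
    · intro ι hι v
      simp only [Set.mem_insert_iff, Set.mem_singleton_iff] at hι
      rcases hι with rfl | rfl | rfl
      · exact fun _ => trivial
      · exact fun _ => trivial
      · exact fun _ => trivial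
    · intro h
      exact h (fun _ => False) trivial
  have hS : ¬ SLOCons ({e_refl, e_trans, e_fun} : Set (SPImp Unit)) e_dp := by
    intro h
    obtain ⟨A, h1, h2⟩ := hA
    exact h2 (h A h1)
  exact ⟨hK, hA, hS, fun h => hS ((h e_dp).1 hK)⟩
end

section
/- For every n ≥ 2, none of the unimodal spi-logics axiomatised by {e_funⁿ}, {e_refl, e_funⁿ}, {e_trans, e_funⁿ}, Ec_qo ∪ {e_funⁿ}, or Ec_equiv ∪ {e_funⁿ} is complex. In fact, there is a single finite SLO (with n+3 elements) validating every member of Ec_equiv ∪ {e_funⁿ} that admits no sp-embedding into F* for any frame F validating e_funⁿ. -/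
/-- Conjunction of a list of variables (with a final `⊤`). -/
def conjVarsList : List ℕ → SP Unit
  | [] => SP.top
  | n :: L => (SP.var n).and (conjVarsList L)

/-- The conjunction `⋀ Q` of a finite set of variables. -/
def conjVars (Q : Finset ℕ) : SP Unit := conjVarsList (Q.sort (· ≤ ·))

/-- Conjunction of a list of sp-formulas (with a final `⊤`). -/
def conjSP : List (SP Unit) → SP Unit
  | [] => SP.top
  | φ :: L => φ.and (conjSP L)

/-- `e_funⁿ`: the sp-implication
`⋀_{Q ⊆ {p₀,…,pₙ}, |Q| = n} ◇(⋀ Q) → ◇(p₀ ∧ ⋯ ∧ pₙ)`. -/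
noncomputable def eFun (n : ℕ) : SPImp Unit :=
  (conjSP ((((Finset.range (n + 1)).powersetCard n).toList).map fun Q => (conjVars Q).d),
   (conjVars (Finset.range (n + 1))).d)

inductive MM (n : ℕ) : Type
  | bot : MM n
  | top : MM n
  | at' : Fin (n + 1) → MM n

namespace MM

variable {n : ℕ}

def inf : MM n → MM n → MM n
  | bot, _ => bot
  | top, b => b
  | at' _, bot => bot
  | at' i, top => at' i
  | at' i, at' j => if i = j then at' i else bot

instance : Min (MM n) := ⟨inf⟩

theorem inf_def (a b : MM n) : a ⊓ b = inf a b := rfl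

instance : SemilatticeInf (MM n) := SemilatticeInf.mk'
  (by intro a b; cases a <;> cases b <;> simp only [inf_def, inf] <;> grind)
  (by intro a b c; cases a <;> cases b <;> cases c <;> simp only [inf_def, inf] <;> grind [inf])
  (by intro a; cases a <;> simp [inf_def, inf])

theorem le_iff (a b : MM n) : a ≤ b ↔ inf a b = a := by
  rw [← inf_eq_left]; rfl

instance : OrderTop (MM n) where
  top := top
  le_top a := by rw [le_iff]; cases a <;> simp [inf]

theorem top_eq : (⊤ : MM n) = top := rfl

theorem bot_le (a : MM n) : bot ≤ a := by rw [le_iff]; rfl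

theorem le_bot {a : MM n} (h : a ≤ bot) : a = bot := by
  rw [le_iff] at h; cases a <;> simp_all [inf]

def equiv : MM n ≃ Option (Option (Fin (n + 1))) where
  toFun | bot => none | top => some none | at' i => some (some i)
  invFun | none => bot | some none => top | some (some i) => at' i
  left_inv a := by cases a <;> rfl
  right_inv a := by rcases a with _ | _ | _ <;> rfl

def dia : MM n → MM n
  | bot => bot
  | _ => top

theorem dia_of_ne {a : MM n} (h : a ≠ bot) : dia a = ⊤ := by
  cases a <;> simp_all [dia, top_eq]

theorem dia_mono : Monotone (dia : MM n → MM n) := by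
  intro a b h
  by_cases hb : b = bot
  · subst hb; rw [le_bot h]
  · rw [dia_of_ne hb]; exact le_top

end MM

def MA (n : ℕ) : SLO Unit where
  carrier := MM n
  dia _ := MM.dia
  mono _ := MM.dia_mono

theorem eval_cvl_le {Ax : SLO Unit} (v : ℕ → Ax.carrier) (L : List ℕ) :
    ∀ i ∈ L, Ax.eval v (conjVarsList L) ≤ v i := by
  induction L with
  | nil => simp
  | cons a L ih =>
    intro i hi
    rcases List.mem_cons.1 hi with rfl | hi
    · exact inf_le_left
    · exact inf_le_right.trans (ih i hi)

theorem le_eval_cvl {A : SLO Unit} (v : ℕ → A.carrier) (c : A.carrier) (L : List ℕ)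
    (h : ∀ i ∈ L, c ≤ v i) : c ≤ A.eval v (conjVarsList L) := by
  induction L with
  | nil => exact le_top
  | cons a L ih =>
    exact le_inf (h a (by simp)) (ih fun i hi => h i (by simp [hi]))

theorem eval_csp_le {A : SLO Unit} (v : ℕ → A.carrier) (L : List (SP Unit)) :
    ∀ φ ∈ L, A.eval v (conjSP L) ≤ A.eval v φ := by
  induction L with
  | nil => simp
  | cons a L ih =>
    intro i hi
    rcases List.mem_cons.1 hi with rfl | hi
    · exact inf_le_left
    · exact inf_le_right.trans (ih i hi)

theorem truth_cvl {F : KFrame Unit} (v : ℕ → Set F.world) (L : List ℕ) (w : F.world) :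
    F.truth v (conjVarsList L) w ↔ ∀ i ∈ L, w ∈ v i := by
  induction L with
  | nil => simp [conjVarsList, KFrame.truth]
  | cons a L ih => simp [conjVarsList, KFrame.truth, ih]

theorem truth_csp {F : KFrame Unit} (v : ℕ → Set F.world) (L : List (SP Unit)) (w : F.world) :
    F.truth v (conjSP L) w ↔ ∀ φ ∈ L, F.truth v φ w := by
  induction L with
  | nil => simp [conjSP, KFrame.truth]
  | cons a L ih => simp [conjSP, KFrame.truth, ih]

theorem exists_Q {n : ℕ} (hn : 2 ≤ n) {i j : ℕ} (hi : i < n + 1) (hj : j < n + 1) :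
    ∃ Q ∈ (Finset.range (n + 1)).powersetCard n, i ∈ Q ∧ j ∈ Q := by
  obtain ⟨Q, h1, h2, h3⟩ := Finset.exists_subsuperset_card_eq (s := {i, j})
    (t := Finset.range (n + 1)) (n := n)
    (by intro x; simp; omega) (Finset.card_le_two.trans hn) (by simp)
  exact ⟨Q, by simp [Finset.mem_powersetCard, h2, h3], h1 (by simp), h1 (by simp)⟩

theorem MA_valid_fun {n : ℕ} (hn : 2 ≤ n) : (MA n).Valid (eFun n) := by
  intro v
  by_cases hb : (MA n).eval v (eFun n).1 = MM.bot
  · rw [hb]; exact MM.bot_le _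
  have key : ∀ i < n + 1, ∀ j < n + 1, MM.inf (v i) (v j) ≠ MM.bot := by
    intro i hi j hj h0
    obtain ⟨Q, hQ, hiQ, hjQ⟩ := exists_Q hn hi hj
    have h1 := eval_csp_le v _ _ (List.mem_map_of_mem (f := fun Q => (conjVars Q).d)
      (Finset.mem_toList.2 hQ))
    have h2 : (MA n).eval v (conjVars Q) ≤ v i ⊓ v j :=
      le_inf (eval_cvl_le v _ i ((Finset.mem_sort _).2 hiQ))
        (eval_cvl_le v _ j ((Finset.mem_sort _).2 hjQ))
    have h3 : (MA n).eval v (conjVars Q) = MM.bot := MM.le_bot (h2.trans (le_of_eq h0))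
    have h4 : (MA n).eval v ((conjVars Q).d) = MM.bot := by
      change MM.dia ((MA n).eval v (conjVars Q)) = _
      rw [h3]; rfl
    apply hb
    exact MM.le_bot (h1.trans (le_of_eq h4))
  have hc : ∃ c : MM n, c ≠ MM.bot ∧ ∀ i < n + 1, MM.inf c (v i) = c := by
    by_cases h : ∀ i < n + 1, v i = MM.top
    · exact ⟨MM.top, by simp, fun i hi => by rw [h i hi]; rfl⟩
    · push Not at h
      obtain ⟨i, hi, h⟩ := h
      refine ⟨v i, ?_, fun j hj => ?_⟩
      · intro h0; apply key i hi i hi; rw [h0]; rfl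
      · have := key i hi j hj
        revert this h
        clear * -
        generalize v i = a
        generalize v j = b
        change MM n at a b
        intro h this
        cases a
        · rfl
        · exact absurd rfl h
        · cases b
          · exact absurd rfl this
          · rfl
          · simp only [MM.inf] at this ⊢
            split_ifs at this ⊢
            · rfl
            · exact absurd rfl this
  obtain ⟨c, hc, h⟩ := hc
  have h1 : c ≤ (MA n).eval v (conjVars (Finset.range (n + 1))) :=
    le_eval_cvl (A := MA n) v c _ fun i hi =>
      (MM.le_iff _ _).2 (h i (by simpa using (Finset.mem_sort _).1 hi))
  have h2 : (MA n).eval v (eFun n).2 = ⊤ := by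
    change MM.dia ((MA n).eval v (conjVars (Finset.range (n + 1)))) = _
    refine MM.dia_of_ne fun h0 => hc (MM.le_bot (h1.trans (le_of_eq h0)))
  rw [h2]; exact le_top

theorem MA_valid {n : ℕ} (hn : 2 ≤ n) :
    (MA n).ValidSet ({e_refl, e_trans, e_sym, eFun n} : Set (SPImp Unit)) := by
  rintro ι (rfl | rfl | rfl | rfl)
  · intro v
    change v 0 ≤ MM.dia (v 0)
    by_cases h : v 0 = MM.bot
    · rw [h]; exact MM.bot_le _
    · rw [MM.dia_of_ne h]; exact le_top
  · intro v
    change MM.dia (MM.dia (v 0)) ≤ MM.dia (v 0)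
    by_cases h : v 0 = MM.bot
    · rw [h]; exact MM.bot_le _
    · rw [MM.dia_of_ne h]; exact le_top
  · intro v
    change (v 1 : MM n) ⊓ MM.dia (v 0) ≤ MM.dia ((v 0 : MM n) ⊓ MM.dia (v 1))
    generalize v 0 = a
    generalize v 1 = b
    change MM n at a b
    change b ⊓ MM.dia a ≤ MM.dia (a ⊓ MM.dia b)
    by_cases h : a = MM.bot
    · rw [h]; exact inf_le_right.trans (MM.bot_le _)
    by_cases h' : b = MM.bot
    · rw [h']; exact inf_le_left.trans (MM.bot_le _)
    · rw [MM.dia_of_ne h', inf_top_eq, MM.dia_of_ne h]; exact le_top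
  · exact MA_valid_fun hn

theorem MA_no_aux {n : ℕ} (F : KFrame Unit) (hF : F.Valid (eFun n))
    (θ : MM n → Set F.world) (hinj : Function.Injective θ) (htop : θ MM.top = Set.univ)
    (hinf : ∀ a b, θ (MM.inf a b) = θ a ∩ θ b)
    (hdia : ∀ a, θ (MM.dia a) = {w | ∃ u ∈ θ a, F.rel () w u}) : False := by
  have hne : θ MM.bot ≠ Set.univ := by
    intro h
    have := hinj (h.trans htop.symm)
    cases this
  obtain ⟨w, hw⟩ := (Set.ne_univ_iff_exists_notMem _).1 hne
  have hsucc : ∀ i : Fin (n + 1), ∃ u : F.world, F.rel () w u ∧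
      u ∈ (θ (MM.at' i) : Set F.world) ∧ u ∉ (θ MM.bot : Set F.world) := by
    intro i
    have h1 : w ∈ θ (MM.dia (MM.at' i)) := by
      have : MM.dia (MM.at' i) = MM.top := rfl
      rw [this, htop]; trivial
    rw [hdia] at h1
    obtain ⟨u, hu, hr⟩ := h1
    refine ⟨u, hr, hu, fun hb => hw ?_⟩
    have h2 : θ MM.bot = {w | ∃ u ∈ θ MM.bot, F.rel () w u} := hdia MM.bot
    rw [h2]
    exact ⟨u, hb, hr⟩
  choose u hr hu hub using hsucc
  have hdist : ∀ i j, u i = u j → i = j := by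
    intro i j hij
    by_contra hne
    apply hub i
    have h1 : θ MM.bot = θ (MM.at' i) ∩ θ (MM.at' j) := by
      rw [← hinf]; simp [MM.inf, hne]
    rw [h1]
    exact ⟨hu i, hij ▸ hu j⟩
  let v : ℕ → Set F.world := fun k => {x | ∃ j : Fin (n + 1), (j : ℕ) ≠ k ∧ x = u j}
  have hprem : F.truth v (eFun n).1 w := by
    refine (truth_csp v _ w).2 ?_
    intro φ hφ
    obtain ⟨Q, hQ, rfl⟩ := List.mem_map.1 hφ
    rw [Finset.mem_toList, Finset.mem_powersetCard] at hQ
    obtain ⟨k, hk, hkQ⟩ : ∃ k ∈ Finset.range (n + 1), k ∉ Q := by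
      apply Finset.exists_mem_notMem_of_card_lt_card
      simp [hQ.2]
    refine ⟨u ⟨k, Finset.mem_range.1 hk⟩, hr _, (truth_cvl v _ _).2 fun i hi => ?_⟩
    refine ⟨_, ?_, rfl⟩
    rintro rfl
    exact hkQ ((Finset.mem_sort _).1 hi)
  obtain ⟨x, _, hx⟩ := hF v w hprem
  have hx' := (truth_cvl v _ x).1 hx
  obtain ⟨j, _, hj⟩ := hx' 0 ((Finset.mem_sort _).2 (by simp))
  obtain ⟨k, hk, hk'⟩ := hx' j ((Finset.mem_sort _).2 (Finset.mem_range.2 j.2))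
  exact hk (by rw [hdist k j (hk'.symm.trans hj)])

theorem MA_no {n : ℕ} (F : KFrame Unit) (hF : F.Valid (eFun n))
    (η : (MA n).carrier → (KFrame.cmpl F).carrier) :
    ¬ IsSpEmbedding (MA n) (KFrame.cmpl F) η := by
  rintro ⟨hinj, htop, hinf, hdia⟩
  exact MA_no_aux F hF η hinj htop hinf (hdia ())

theorem MA_not {n : ℕ} (hn : 2 ≤ n) (Ax : Set (SPImp Unit))
    (h : Ax ⊆ {e_refl, e_trans, e_sym, eFun n}) (h' : eFun n ∈ Ax) : ¬ IsComplexLogic Ax := by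
  intro hc
  obtain ⟨F, hF, η, hη⟩ := hc (MA n) fun ι hι => MA_valid hn ι (h hι)
  exact MA_no F (hF _ h') η hη

/-- For `n ≥ 2`, none of the unimodal spi-logics axiomatised by
`{e_funⁿ}`, `{e_refl, e_funⁿ}`, `{e_trans, e_funⁿ}`, `Ec_qo ∪ {e_funⁿ}` or
`Ec_equiv ∪ {e_funⁿ}` is complex. In fact, there is a single finite SLO with
`n + 3` elements validating every member of `Ec_equiv ∪ {e_funⁿ}` that admits no
sp-embedding into `F*` for any frame `F` validating `e_funⁿ`. -/
theorem stmt13 (n : ℕ) (hn : 2 ≤ n) :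
    ¬ IsComplexLogic ({eFun n} : Set (SPImp Unit)) ∧
    ¬ IsComplexLogic ({e_refl, eFun n} : Set (SPImp Unit)) ∧
    ¬ IsComplexLogic ({e_trans, eFun n} : Set (SPImp Unit)) ∧
    ¬ IsComplexLogic ({e_refl, e_trans, eFun n} : Set (SPImp Unit)) ∧
    ¬ IsComplexLogic ({e_refl, e_trans, e_sym, eFun n} : Set (SPImp Unit)) ∧
    ∃ A : SLO Unit, Finite A.carrier ∧ Nat.card A.carrier = n + 3 ∧
      A.ValidSet ({e_refl, e_trans, e_sym, eFun n} : Set (SPImp Unit)) ∧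
      ∀ F : KFrame Unit, F.Valid (eFun n) →
        ∀ η : A.carrier → (KFrame.cmpl F).carrier, ¬ IsSpEmbedding A (KFrame.cmpl F) η := by
  refine ⟨MA_not hn _ (by grind) (by simp), MA_not hn _ (by grind) (by simp),
    MA_not hn _ (by grind) (by simp), MA_not hn _ (by grind) (by simp),
    MA_not hn _ (by grind) (by simp), MA n, ?_, ?_, MA_valid hn, fun F hF η => MA_no F hF η⟩
  · exact Finite.of_equiv _ (MM.equiv (n := n)).symm
  · change Nat.card (MM n) = _
    rw [Nat.card_congr MM.equiv]
    simp
end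

section
/- For every n ≥ 1, the unimodal spi-logic axiomatised by {e_funⁿ} is complete: for every sp-implication ι, {e_funⁿ} ⊨_Kr ι if and only if {e_funⁿ} ⊨_SLO ι. -/
/-- Trees naming the prime formulas. -/
inductive PT (n : ℕ) : Type
  | var : ℕ → PT n
  | node : (r : Fin (n + 1)) → (Fin r.val → PT n) → PT n

namespace PT

/-- The prime formula named by a tree. -/
def form {n : ℕ} : PT n → SP Unit
  | .var x => SP.var x
  | .node _ f => (conjSP (List.ofFn fun i => form (f i))).d

/-- Accessibility in the canonical frame. -/
def acc {n : ℕ} : Option (PT n) → Option (PT n) → Prop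
  | none, u => u = none
  | some (.var _), u => u = none
  | some (.node _ f), u => ∃ i, u = some (f i)

/-- The valuation. -/
def val {n : ℕ} (x : ℕ) : Set (Option (PT n)) := {w | w ≠ some (.var x)}

/-- The canonical frame. -/
def frame (n : ℕ) : KFrame Unit where
  world := Option (PT n)
  instNonempty := ⟨none⟩
  rel _ := acc

theorem truth_conjSP (F : KFrame Unit) (v : ℕ → Set F.world) (w : F.world) (L : List (SP Unit)) :
    F.truth v (conjSP L) w ↔ ∀ φ ∈ L, F.truth v φ w := by
  induction L with
  | nil => simp [conjSP, KFrame.truth]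
  | cons a L ih => simp [conjSP, KFrame.truth, ih]

theorem truth_conjVarsList (F : KFrame Unit) (v : ℕ → Set F.world) (w : F.world) (L : List ℕ) :
    F.truth v (conjVarsList L) w ↔ ∀ x ∈ L, w ∈ v x := by
  induction L with
  | nil => simp [conjVarsList, KFrame.truth]
  | cons a L ih => simp [conjVarsList, KFrame.truth, ih]

theorem truth_conjVars (F : KFrame Unit) (v : ℕ → Set F.world) (w : F.world) (Q : Finset ℕ) :
    F.truth v (conjVars Q) w ↔ ∀ x ∈ Q, w ∈ v x := by
  simp [conjVars, truth_conjVarsList]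

theorem le_conjSP (A : SLO Unit) (v : ℕ → A.carrier) (a : A.carrier) (L : List (SP Unit)) :
    a ≤ A.eval v (conjSP L) ↔ ∀ φ ∈ L, a ≤ A.eval v φ := by
  induction L with
  | nil => simp [conjSP, SLO.eval]
  | cons b L ih => simp [conjSP, SLO.eval, ih]

theorem le_conjVarsList (A : SLO Unit) (v : ℕ → A.carrier) (a : A.carrier) (L : List ℕ) :
    a ≤ A.eval v (conjVarsList L) ↔ ∀ x ∈ L, a ≤ v x := by
  induction L with
  | nil => simp [conjVarsList, SLO.eval]
  | cons b L ih => simp [conjVarsList, SLO.eval, ih]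

theorem le_conjVars (A : SLO Unit) (v : ℕ → A.carrier) (a : A.carrier) (Q : Finset ℕ) :
    a ≤ A.eval v (conjVars Q) ↔ ∀ x ∈ Q, a ≤ v x := by
  simp [conjVars, le_conjVarsList]

theorem truth_none (n : ℕ) (σ : SP Unit) : (frame n).truth val σ none := by
  induction σ with
  | var x => exact fun h : (none : Option (PT n)) = some (PT.var x) => nomatch h
  | top => trivial
  | and a b iha ihb => exact ⟨iha, ihb⟩
  | dia r a ih => exact ⟨none, rfl, ih⟩

theorem le_of_not_truth {n : ℕ} (A : SLO Unit) (v : ℕ → A.carrier) (t : PT n) :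
    ∀ σ : SP Unit, ¬ (frame n).truth val σ (some t) → A.eval v σ ≤ A.eval v t.form := by
  induction t with
  | var x =>
    intro σ
    induction σ with
    | var y =>
      intro h
      have : x = y := by
        by_contra hne
        refine h (fun h' : (some (PT.var x) : Option (PT n)) = some (PT.var y) => hne ?_)
        cases h'
        rfl
      subst this
      exact le_rfl
    | top => intro h; exact absurd trivial h
    | and a b iha ihb =>
      intro h
      by_cases ha : (frame n).truth val a (some (PT.var x))
      · by_cases hb : (frame n).truth val b (some (PT.var x))
        · exact absurd ⟨ha, hb⟩ h
        · exact inf_le_right.trans (ihb hb)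
      · exact inf_le_left.trans (iha ha)
    | dia r a ih => intro h; exact absurd ⟨none, rfl, truth_none n a⟩ h
  | node r f IH =>
    intro σ
    induction σ with
    | var y =>
      intro h
      exact absurd (fun h' : some (PT.node r f) = some (PT.var y) => nomatch h') h
    | top => intro h; exact absurd trivial h
    | and a b iha ihb =>
      intro h
      by_cases ha : (frame n).truth val a (some (PT.node r f))
      · by_cases hb : (frame n).truth val b (some (PT.node r f))
        · exact absurd ⟨ha, hb⟩ h
        · exact inf_le_right.trans (ihb hb)
      · exact inf_le_left.trans (iha ha)
    | dia s a ih =>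
      intro h
      have h' : ∀ i, ¬ (frame n).truth val a (some (f i)) :=
        fun i hi => h ⟨some (f i), ⟨i, rfl⟩, hi⟩
      refine A.mono () ?_
      rw [le_conjSP]
      intro φ hφ
      obtain ⟨i, rfl⟩ := List.mem_ofFn.1 hφ
      exact IH i a (h' i)

theorem not_truth_form {n : ℕ} (t : PT n) : ¬ (frame n).truth val t.form (some t) := by
  induction t with
  | var x => intro h; exact h rfl
  | node r f IH =>
    rintro ⟨u, ⟨i, rfl⟩, h⟩
    exact IH i ((truth_conjSP _ _ _ _).1 h _ (List.mem_ofFn.2 ⟨i, rfl⟩))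

theorem acc_small {n : ℕ} (hn : 1 ≤ n) (w : Option (PT n)) :
    ∃ S : Finset (Option (PT n)), S.card ≤ n ∧ ∀ u, acc w u → u ∈ S := by
  classical
  match w with
  | none => exact ⟨{none}, by simpa using hn, fun u hu => by simpa [acc] using hu⟩
  | some (.var x) => exact ⟨{none}, by simpa using hn, fun u hu => by simpa [acc] using hu⟩
  | some (.node r f) =>
    refine ⟨Finset.univ.image fun i => some (f i), ?_, ?_⟩
    · refine Finset.card_image_le.trans ?_
      simp only [Finset.card_univ, Fintype.card_fin]
      omega
    · rintro u ⟨i, rfl⟩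
      simp

theorem frame_valid {n : ℕ} (hn : 1 ≤ n) : (frame n).Valid (eFun n) := by
  intro v w h
  classical
  obtain ⟨S, hS, hacc⟩ := acc_small hn w
  simp only [eFun] at h ⊢
  rw [truth_conjSP] at h
  have h1 : ∀ i ∈ Finset.range (n + 1), ∃ u, acc w u ∧
      ∀ x ∈ (Finset.range (n + 1)).erase i, u ∈ v x := by
    intro i hi
    have := h ((conjVars ((Finset.range (n + 1)).erase i)).d) (List.mem_map.2
      ⟨_, by
        rw [Finset.mem_toList, Finset.mem_powersetCard]
        exact ⟨Finset.erase_subset _ _, by simp [Finset.card_erase_of_mem hi]⟩, rfl⟩)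
    obtain ⟨u, hu, ht⟩ := this
    exact ⟨u, hu, (truth_conjVars _ _ _ _).1 ht⟩
  choose! u hu hv using h1
  obtain ⟨i, hi, j, hj, hij, e⟩ := Finset.exists_ne_map_eq_of_card_lt_of_maps_to
    (s := Finset.range (n + 1)) (t := S) (f := u) (by simpa using Nat.lt_succ_of_le hS)
    (fun i hi => hacc _ (hu i hi))
  refine ⟨u i, hu i hi, (truth_conjVars _ _ _ _).2 fun x hx => ?_⟩
  by_cases hxi : x = i
  · rw [e]
    exact hv j hj x (Finset.mem_erase.2 ⟨fun hxj => hij (hxi.symm.trans hxj), hx⟩)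
  · exact hv i hi x (Finset.mem_erase.2 ⟨hxi, hx⟩)

/-- Value of a finite set of primes. -/
def V {n : ℕ} (A : SLO Unit) (v : ℕ → A.carrier) (K : Finset (PT n)) : A.carrier :=
  K.inf fun t => A.eval v t.form

theorem dia_V {n : ℕ} (m : ℕ) : ∀ K : Finset (PT n), K.card = m → ∃ K' : Finset (PT n),
    ∀ (A : SLO Unit), A.Valid (eFun n) → ∀ v : ℕ → A.carrier, A.dia () (V A v K) = V A v K' := by
  classical
  induction m using Nat.strong_induction_on with
  | _ m IH =>
  intro K hK
  by_cases hm : m ≤ n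
  · let e := (K.equivFinOfCardEq hK)
    refine ⟨{PT.node ⟨m, by omega⟩ fun i => (e.symm i).1}, fun A _ v => ?_⟩
    simp only [V, Finset.inf_singleton, form, SP.d, SLO.eval]
    congr 1
    apply le_antisymm
    · rw [le_conjSP]
      intro φ hφ
      obtain ⟨i, rfl⟩ := List.mem_ofFn.1 hφ
      exact Finset.inf_le (f := fun t : PT n => A.eval v t.form) (e.symm i).2
    · refine Finset.le_inf fun t ht => ?_
      refine (le_conjSP A v _ _).1 le_rfl _ (List.mem_ofFn.2 ⟨e ⟨t, ht⟩, ?_⟩)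
      simp
  · push Not at hm
    let e := (K.equivFinOfCardEq hK)
    let cls : PT n → ℕ := fun t => if ht : t ∈ K then min (e ⟨t, ht⟩).1 n else 0
    have hcls : ∀ t, cls t ≤ n := by
      intro t
      simp only [cls]
      split_ifs <;> omega
    have hsurj : ∀ i ≤ n, ∃ t ∈ K, cls t = i := by
      intro i hi
      refine ⟨(e.symm ⟨i, by omega⟩).1, (e.symm ⟨i, by omega⟩).2, ?_⟩
      simp [cls, hi]
    have hsub : ∀ i ∈ Finset.range (n + 1), ∃ K' : Finset (PT n),
        ∀ (A : SLO Unit), A.Valid (eFun n) → ∀ v : ℕ → A.carrier,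
          A.dia () (V A v (K.filter fun t => cls t ≠ i)) = V A v K' := by
      intro i hi
      refine IH _ ?_ (K.filter fun t => cls t ≠ i) rfl
      rw [← hK]
      apply Finset.card_lt_card
      rw [Finset.filter_ssubset]
      obtain ⟨t, ht, h⟩ := hsurj i (by simpa [Nat.lt_succ_iff] using hi)
      exact ⟨t, ht, by simpa using h⟩
    choose! K' hK' using hsub
    refine ⟨(Finset.range (n + 1)).biUnion K', fun A hA v => ?_⟩
    have hV : V A v ((Finset.range (n + 1)).biUnion K') =
        (Finset.range (n + 1)).inf fun i => A.dia () (V A v (K.filter fun t => cls t ≠ i)) := by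
      simp only [V, Finset.inf_biUnion]
      refine Finset.inf_congr rfl fun i hi => ?_
      exact (hK' i hi A hA v).symm
    rw [hV]
    apply le_antisymm
    · refine Finset.le_inf fun i _ => A.mono () ?_
      exact Finset.inf_mono (Finset.filter_subset _ _)
    · let p : ℕ → A.carrier := fun j => V A v (K.filter fun t => cls t = j)
      refine le_trans ?_ ((hA p).trans (A.mono () ?_))
      · simp only [eFun]
        rw [le_conjSP]
        intro φ hφ
        obtain ⟨Q, hQ, rfl⟩ := List.mem_map.1 hφ
        rw [Finset.mem_toList, Finset.mem_powersetCard] at hQ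
        obtain ⟨i, hi, hiQ⟩ : ∃ i ∈ Finset.range (n + 1), i ∉ Q := by
          apply Finset.exists_mem_notMem_of_card_lt_card
          simp [hQ.2]
        refine (Finset.inf_le hi).trans (A.mono () ?_)
        rw [le_conjVars]
        intro j hj
        refine Finset.inf_mono ?_
        intro t ht
        rw [Finset.mem_filter] at ht ⊢
        exact ⟨ht.1, fun h => hiQ (by rw [← h, ht.2]; exact hj)⟩
      · refine Finset.le_inf fun t ht => ?_
        refine ((le_conjVars A p _ _).1 le_rfl (cls t)
          (by simpa [Nat.lt_succ_iff] using hcls t)).trans ?_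
        exact Finset.inf_le (f := fun t : PT n => A.eval v t.form)
          (Finset.mem_filter.2 ⟨ht, rfl⟩)

theorem exists_primes (n : ℕ) (τ : SP Unit) : ∃ K : Finset (PT n),
    ∀ (A : SLO Unit), A.Valid (eFun n) → ∀ v : ℕ → A.carrier, A.eval v τ = V A v K := by
  classical
  induction τ with
  | var x => exact ⟨{PT.var x}, fun A _ v => by simp [V, form]⟩
  | top => exact ⟨∅, fun A _ v => by simp [V, SLO.eval]⟩
  | and a b iha ihb =>
    obtain ⟨K, hK⟩ := iha
    obtain ⟨L, hL⟩ := ihb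
    exact ⟨K ∪ L, fun A hA v => by
      simp only [SLO.eval, hK A hA v, hL A hA v, V, Finset.inf_union]⟩
  | dia r a ih =>
    obtain ⟨K, hK⟩ := ih
    obtain ⟨L, hL⟩ := dia_V _ K rfl
    exact ⟨L, fun A hA v => by rw [← hL A hA v, ← hK A hA v]; rfl⟩

theorem eval_cmpl (F : KFrame Unit) (v : ℕ → Set F.world) (σ : SP Unit) :
    ∀ w, (show Set F.world from F.cmpl.eval v σ) w ↔ F.truth v σ w := by
  induction σ with
  | var x => intro w; rfl
  | top => intro w; exact iff_of_true (Set.mem_univ w) trivial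
  | and a b iha ihb => intro w; exact and_congr (iha w) (ihb w)
  | dia r a ih =>
    intro w
    constructor
    · rintro ⟨u, hu, hr⟩; exact ⟨u, hr, (ih u).1 hu⟩
    · rintro ⟨u, hr, hu⟩; exact ⟨u, (ih u).2 hu, hr⟩

theorem valid_cmpl (F : KFrame Unit) (ι : SPImp Unit) : F.cmpl.Valid ι ↔ F.Valid ι := by
  constructor
  · intro h v w hw
    exact (eval_cmpl F v _ w).1 (h v ((eval_cmpl F v _ w).2 hw))
  · intro h v w hw
    exact (eval_cmpl F v _ w).2 (h v w ((eval_cmpl F v _ w).1 hw))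

end PT

/-- For every `n ≥ 1`, the unimodal spi-logic axiomatised by
`{e_funⁿ}` is complete: `{e_funⁿ} ⊨_Kr ι` iff `{e_funⁿ} ⊨_SLO ι` for every
sp-implication `ι`. -/
theorem stmt14 (n : ℕ) (hn : 1 ≤ n) :
    IsCompleteLogic ({eFun n} : Set (SPImp Unit)) := by
  intro ι
  constructor
  · intro h A hA v
    have hA' : A.Valid (eFun n) := hA _ rfl
    obtain ⟨K, hK⟩ := PT.exists_primes n ι.2
    rw [hK A hA' v]
    refine Finset.le_inf fun t ht => ?_
    apply PT.le_of_not_truth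
    intro hσ
    have hF := PT.frame_valid hn
    have h2 := h (PT.frame n) (by rintro _ rfl; exact hF) PT.val (some t) hσ
    have hc := (PT.valid_cmpl _ _).2 hF
    have hle : (PT.frame n).cmpl.eval PT.val ι.2 ≤ (PT.frame n).cmpl.eval PT.val t.form := 
      (hK _ hc PT.val).le.trans
        (Finset.inf_le (f := fun t : PT n => (PT.frame n).cmpl.eval PT.val t.form) ht)
    exact PT.not_truth_form t
      ((PT.eval_cmpl _ _ _ _).1 (hle ((PT.eval_cmpl _ _ _ _).2 h2)))
  · intro h F hF
    rw [← PT.valid_cmpl]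
    refine h _ ?_
    intro κ hκ
    exact (PT.valid_cmpl _ _).2 (hF κ hκ)
end

section
/- For every n ≥ 2, the unimodal spi-logic SPiⁿ_equiv axiomatised by Ec_equiv ∪ {e_funⁿ} is complete: for every sp-implication ι, Ec_equiv ∪ {e_funⁿ} ⊨_Kr ι if and only if Ec_equiv ∪ {e_funⁿ} ⊨_SLO ι. (The frames validating Ec_equiv ∪ {e_funⁿ} are exactly the frames whose relation is an equivalence relation all of whose classes have at most n elements.) -/
section Helpers

theorem truth_conjVarsList (F : KFrame Unit) (v : ℕ → Set F.world) (w : F.world) (L : List ℕ) :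
    F.truth v (conjVarsList L) w ↔ ∀ x ∈ L, w ∈ v x := by
  induction L with
  | nil => simp [conjVarsList, KFrame.truth]
  | cons a L ih => simp [conjVarsList, KFrame.truth, ih]

theorem truth_conjVars (F : KFrame Unit) (v : ℕ → Set F.world) (w : F.world) (Q : Finset ℕ) :
    F.truth v (conjVars Q) w ↔ ∀ x ∈ Q, w ∈ v x := by
  simp [conjVars, truth_conjVarsList]

theorem truth_conjSP (F : KFrame Unit) (v : ℕ → Set F.world) (w : F.world) (L : List (SP Unit)) :
    F.truth v (conjSP L) w ↔ ∀ φ ∈ L, F.truth v φ w := by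
  induction L with
  | nil => simp [conjSP, KFrame.truth]
  | cons a L ih => simp [conjSP, KFrame.truth, ih]

theorem mem_pc (n : ℕ) (Q : Finset ℕ) :
    Q ∈ (Finset.range (n + 1)).powersetCard n ↔
      ∃ i ∈ Finset.range (n + 1), Q = (Finset.range (n + 1)).erase i := by
  rw [Finset.mem_powersetCard]
  constructor
  · rintro ⟨h1, h2⟩
    have h3 : (Finset.range (n + 1) \ Q).card = 1 := by
      rw [Finset.card_sdiff_of_subset h1]; simp [h2]
    obtain ⟨i, hi⟩ := Finset.card_eq_one.1 h3
    have hi' : i ∈ Finset.range (n + 1) \ Q := by rw [hi]; simp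
    refine ⟨i, (Finset.mem_sdiff.1 hi').1, ?_⟩
    rw [Finset.erase_eq, ← hi, Finset.sdiff_sdiff_eq_self h1]
  · rintro ⟨i, hi, rfl⟩
    exact ⟨Finset.erase_subset _ _, by rw [Finset.card_erase_of_mem hi]; simp⟩

theorem truth_eFun (n : ℕ) (F : KFrame Unit) (v : ℕ → Set F.world) (w : F.world) :
    F.truth v (eFun n).1 w ↔ ∀ i ∈ Finset.range (n + 1), ∃ u, F.rel () w u ∧
      ∀ j ∈ (Finset.range (n + 1)).erase i, u ∈ v j := by
  simp only [eFun, truth_conjSP, List.mem_map, Finset.mem_toList, mem_pc]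
  constructor
  · intro h i hi
    have := h _ ⟨_, ⟨i, hi, rfl⟩, rfl⟩
    simpa only [SP.d, KFrame.truth, truth_conjVars] using this
  · rintro h _ ⟨_, ⟨i, hi, rfl⟩, rfl⟩
    simpa only [SP.d, KFrame.truth, truth_conjVars] using h i hi

theorem frames_iff (n : ℕ) (F : KFrame Unit) :
    F.ValidSet ({e_refl, e_trans, e_sym, eFun n} : Set (SPImp Unit)) ↔
        (Equivalence (F.rel ()) ∧ ∀ w : F.world,
          {u : F.world | F.rel () w u}.Finite ∧
          {u : F.world | F.rel () w u}.ncard ≤ n) := by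
  constructor
  · intro h
    have h1 := h e_refl (by simp)
    have h2 := h e_trans (by simp)
    have h3 := h e_sym (by simp)
    have h4 := h (eFun n) (by simp)
    have hr : ∀ w, F.rel () w w := by
      intro w
      obtain ⟨u, hu, hu'⟩ := h1 (fun _ => {w}) w rfl
      cases hu'
      exact hu
    have hs : ∀ {x y}, F.rel () x y → F.rel () y x := by
      intro x y hxy
      obtain ⟨u, hu, hu', z, hz, hz'⟩ := h3 (fun i => if i = 0 then {y} else {x}) x
        ⟨by simp [KFrame.truth], y, hxy, by simp [KFrame.truth]⟩
      simp [KFrame.truth] at hu' hz'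
      subst hu' hz'
      exact hz
    have ht : ∀ {x y z}, F.rel () x y → F.rel () y z → F.rel () x z := by
      intro x y z hxy hyz
      obtain ⟨u, hu, hu'⟩ := h2 (fun _ => {z}) x ⟨y, hxy, z, hyz, rfl⟩
      cases hu'
      exact hu
    refine ⟨⟨hr, hs, ht⟩, fun w => ?_⟩
    rw [← Set.encard_le_coe_iff_finite_ncard_le]
    by_contra hc
    have hc' : ((n + 1 : ℕ) : ℕ∞) ≤ {u : F.world | F.rel () w u}.encard := by
      push_cast
      exact Order.add_one_le_of_lt (not_le.1 hc)
    obtain ⟨t, ht1, ht2⟩ := Set.exists_subset_encard_eq hc'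
    have htf : t.Finite := Set.finite_of_encard_eq_coe ht2
    have : Fintype t := htf.fintype
    have hcard : Fintype.card t = n + 1 := by
      have := Set.coe_fintypeCard t
      rw [ht2] at this
      exact_mod_cast this
    let e : t ≃ Fin (n + 1) := Fintype.equivFinOfCardEq hcard
    have := h4 (fun i => {x | ∃ j : Fin (n + 1), j.val ≠ i ∧ x = e.symm j}) w (by
      rw [truth_eFun]
      intro i hi
      refine ⟨e.symm ⟨i, Finset.mem_range.1 hi⟩, ht1 (e.symm _).2, ?_⟩
      intro j hj
      exact ⟨⟨i, Finset.mem_range.1 hi⟩, (Finset.ne_of_mem_erase hj).symm, rfl⟩)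
    simp only [eFun, SP.d, KFrame.truth, truth_conjVars] at this
    obtain ⟨u, hu, hu'⟩ := this
    obtain ⟨j, -, hj⟩ := hu' 0 (by simp)
    obtain ⟨k, hk, hk'⟩ := hu' j (Finset.mem_range.2 j.2)
    rw [hj] at hk'
    have := e.symm.injective (Subtype.ext hk')
    exact hk (by rw [this])
  · rintro ⟨he, hf⟩ ι hι
    simp only [Set.mem_insert_iff, Set.mem_singleton_iff] at hι
    rcases hι with rfl | rfl | rfl | rfl
    · intro v w hw
      exact ⟨w, he.refl w, hw⟩
    · rintro v w ⟨u, hu, z, hz, h⟩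
      exact ⟨z, he.trans hu hz, h⟩
    · rintro v w ⟨h, u, hu, h'⟩
      exact ⟨u, hu, h', w, he.symm hu, h⟩
    · intro v w h
      rw [truth_eFun] at h
      choose! u hu hu' using h
      obtain ⟨hfin, hc⟩ := hf w
      have : ∃ x ∈ Finset.range (n + 1), ∃ y ∈ Finset.range (n + 1), x ≠ y ∧ u x = u y := by
        refine Finset.exists_ne_map_eq_of_card_lt_of_maps_to (t := hfin.toFinset) ?_ ?_
        · rw [Set.ncard_eq_toFinset_card _ hfin] at hc
          simp; omega
        · intro i hi
          have := hu i hi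
          simpa using this
      obtain ⟨x, hx, y, hy, hne, hxy⟩ := this
      simp only [eFun, SP.d, KFrame.truth, truth_conjVars]
      refine ⟨u x, hu x hx, fun j hj => ?_⟩
      by_cases hjx : j = x
      · rw [hxy]
        exact hu' y hy j (Finset.mem_erase.2 ⟨by rw [hjx]; exact hne, hj⟩)
      · exact hu' x hx j (Finset.mem_erase.2 ⟨hjx, hj⟩)

theorem eval_cmpl (F : KFrame Unit) (v : ℕ → Set F.world) (φ : SP Unit) (w : F.world) :
    w ∈ (show Set F.world from F.cmpl.eval v φ) ↔ F.truth v φ w := by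
  induction φ generalizing w with
  | var n => rfl
  | top => exact ⟨fun _ => trivial, fun _ => trivial⟩
  | and φ ψ h1 h2 => exact and_congr (h1 w) (h2 w)
  | dia r φ ih =>
    constructor
    · rintro ⟨u, hu, hr⟩
      exact ⟨u, hr, (ih u).1 hu⟩
    · rintro ⟨u, hr, hu⟩
      exact ⟨u, (ih u).2 hu, hr⟩

theorem valid_cmpl (F : KFrame Unit) (ι : SPImp Unit) : F.cmpl.Valid ι ↔ F.Valid ι := by
  constructor
  · intro h v w hw
    exact (eval_cmpl F v _ w).1 (h v ((eval_cmpl F v _ w).2 hw))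
  · intro h v w hw
    exact (eval_cmpl F v _ w).2 (h v w ((eval_cmpl F v _ w).1 hw))

/-- Normal form over equivalence relations. -/
def nf : SP Unit → Finset ℕ × List (Finset ℕ)
  | .var n => ({n}, [])
  | .top => (∅, [])
  | .and φ ψ => ((nf φ).1 ∪ (nf ψ).1, (nf φ).2 ++ (nf ψ).2)
  | .dia _ φ => (∅, (nf φ).1 :: (nf φ).2)

theorem truth_nf (F : KFrame Unit) (he : Equivalence (F.rel ())) (v : ℕ → Set F.world)
    (φ : SP Unit) (w : F.world) :
    F.truth v φ w ↔ (∀ x ∈ (nf φ).1, w ∈ v x) ∧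
      ∀ S ∈ (nf φ).2, ∃ u, F.rel () w u ∧ ∀ x ∈ S, u ∈ v x := by
  induction φ generalizing w with
  | var n => simp [nf, KFrame.truth]
  | top => simp [nf, KFrame.truth]
  | and φ ψ h1 h2 =>
    simp only [nf, KFrame.truth, h1, h2, Finset.mem_union, List.mem_append, or_imp, forall_and]
    tauto
  | dia r φ ih =>
    simp only [nf, KFrame.truth, ih, List.mem_cons, forall_eq_or_imp]
    constructor
    · rintro ⟨u, hu, h1, h2⟩
      refine ⟨by simp, ⟨u, hu, h1⟩, fun S hS => ?_⟩
      obtain ⟨z, hz, h⟩ := h2 S hS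
      exact ⟨z, he.trans hu hz, h⟩
    · rintro ⟨-, ⟨u, hu, h1⟩, h2⟩
      refine ⟨u, hu, h1, fun S hS => ?_⟩
      obtain ⟨z, hz, h⟩ := h2 S hS
      exact ⟨z, he.trans (he.symm hu) hz, h⟩

/-- Meet of the diamonds of the members of a list. -/
def dl (A : SLO Unit) (v : ℕ → A.carrier) : List (Finset ℕ) → A.carrier
  | [] => ⊤
  | S :: L => A.dia () (S.inf v) ⊓ dl A v L

theorem le_dl (A : SLO Unit) (v : ℕ → A.carrier) (a : A.carrier) (L : List (Finset ℕ)) :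
    a ≤ dl A v L ↔ ∀ S ∈ L, a ≤ A.dia () (S.inf v) := by
  induction L with
  | nil => simp [dl]
  | cons S L ih => simp [dl, ih]

theorem dl_append (A : SLO Unit) (v : ℕ → A.carrier) (L M : List (Finset ℕ)) :
    dl A v (L ++ M) = dl A v L ⊓ dl A v M := by
  induction L with
  | nil => simp [dl]
  | cons S L ih => simp [dl, ih, inf_assoc]

theorem dl_closed (A : SLO Unit) (h1 : ∀ a, a ≤ A.dia () a) (h2 : ∀ a, A.dia () (A.dia () a) ≤ A.dia () a)
  (h3 : ∀ a b, b ⊓ A.dia () a ≤ A.dia () (a ⊓ A.dia () b))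
    (v : ℕ → A.carrier) (L : List (Finset ℕ)) :
    A.dia () (dl A v L) ≤ dl A v L := by
  rw [le_dl]
  intro S hS
  exact (A.mono () ((le_dl A v _ L).1 le_rfl S hS)).trans (h2 _)

theorem dia_inf (A : SLO Unit) (h1 : ∀ a, a ≤ A.dia () a) (h2 : ∀ a, A.dia () (A.dia () a) ≤ A.dia () a)
  (h3 : ∀ a b, b ⊓ A.dia () a ≤ A.dia () (a ⊓ A.dia () b))
    (v : ℕ → A.carrier) (a : A.carrier) (L : List (Finset ℕ)) :
    A.dia () (a ⊓ dl A v L) = A.dia () a ⊓ dl A v L := by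
  have hc := dl_closed A h1 h2 h3 v L
  apply le_antisymm
  · exact le_inf (A.mono () inf_le_left) ((A.mono () inf_le_right).trans hc)
  · rw [inf_comm]
    exact (h3 a _).trans (A.mono () (inf_le_inf_left _ hc))

theorem eval_nf (A : SLO Unit) (h1 : ∀ a, a ≤ A.dia () a) (h2 : ∀ a, A.dia () (A.dia () a) ≤ A.dia () a)
  (h3 : ∀ a b, b ⊓ A.dia () a ≤ A.dia () (a ⊓ A.dia () b))
    (v : ℕ → A.carrier) (φ : SP Unit) :
    A.eval v φ = (nf φ).1.inf v ⊓ dl A v (nf φ).2 := by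
  induction φ with
  | var n => simp [nf, SLO.eval, dl]
  | top => simp [nf, SLO.eval, dl]
  | and φ ψ h1 h2 =>
    simp only [nf, SLO.eval, h1, h2, Finset.inf_union, dl_append]
    exact inf_inf_inf_comm _ _ _ _
  | dia r φ ih =>
    simp only [nf, SLO.eval, ih, dl, dia_inf A h1 h2 h3, Finset.inf_empty, top_inf_eq]

theorem eval_conjVars (A : SLO Unit) (v : ℕ → A.carrier) (Q : Finset ℕ) :
    A.eval v (conjVars Q) = Q.inf v := by
  have key : ∀ (L : List ℕ), A.eval v (conjVarsList L) = L.toFinset.inf v := by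
    intro L
    induction L with
    | nil => simp [conjVarsList, SLO.eval]
    | cons a L ih => simp [conjVarsList, SLO.eval, ih]
  rw [conjVars, key]; simp

theorem le_conjSP (A : SLO Unit) (v : ℕ → A.carrier) (a : A.carrier) (L : List (SP Unit)) :
    a ≤ A.eval v (conjSP L) ↔ ∀ φ ∈ L, a ≤ A.eval v φ := by
  induction L with
  | nil => simp [conjSP, SLO.eval]
  | cons S L ih => simp [conjSP, SLO.eval, ih]

theorem use_eFun (n : ℕ) (A : SLO Unit) (h : A.Valid (eFun n)) (v : ℕ → A.carrier) (a : A.carrier)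
    (ha : ∀ i ∈ Finset.range (n + 1), a ≤ A.dia () (((Finset.range (n + 1)).erase i).inf v)) :
    a ≤ A.dia () ((Finset.range (n + 1)).inf v) := by
  have h1 : a ≤ A.eval v (eFun n).1 := by
    simp only [eFun, le_conjSP, List.mem_map, Finset.mem_toList, mem_pc]
    rintro _ ⟨_, ⟨i, hi, rfl⟩, rfl⟩
    simpa only [SP.d, SLO.eval, eval_conjVars] using ha i hi
  have h2 := h1.trans (h v)
  simpa only [eFun, SP.d, SLO.eval, eval_conjVars] using h2

theorem grow (n : ℕ) (A : SLO Unit) (h : A.Valid (eFun n)) (v : ℕ → A.carrier) (a : A.carrier)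
    (Q : Finset ℕ) (hQ : ∀ T ⊆ Q, T.card ≤ n → a ≤ A.dia () (T.inf v)) :
    ∀ S ⊆ Q, a ≤ A.dia () (S.inf v) := by
  intro S
  induction S using Finset.strongInduction with
  | H S ih =>
    intro hS
    by_cases hc : S.card ≤ n
    · exact hQ S hS hc
    obtain ⟨c, hc1, hc2⟩ : ∃ c : ℕ → ℕ, (∀ x ∈ S, c x ∈ Finset.range (n + 1)) ∧
        ∀ i ∈ Finset.range (n + 1), ∃ x ∈ S, c x = i := by
      refine ⟨fun x => if hx : x ∈ S then min n (S.equivFin ⟨x, hx⟩).val else 0, ?_, ?_⟩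
      · intro x hx
        simp [hx]
      · intro i hi
        have hi' : i < n + 1 := Finset.mem_range.1 hi
        refine ⟨(S.equivFin.symm ⟨i, by omega⟩).1, (S.equivFin.symm ⟨i, by omega⟩).2, ?_⟩
        simp
        omega
    have := use_eFun n A h (fun i => (S.filter (fun x => c x = i)).inf v) a (by
      intro i hi
      have hlt : S.filter (fun x => c x ≠ i) ⊂ S := by
        obtain ⟨x, hx, hxi⟩ := hc2 i hi
        exact Finset.filter_ssubset.2 ⟨x, hx, by simpa using hxi⟩
      refine (ih _ hlt (hlt.1.trans hS)).trans (A.mono () ?_)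
      refine Finset.le_inf fun j hj => Finset.inf_mono ?_
      intro x hx
      simp only [Finset.mem_filter] at hx ⊢
      exact ⟨hx.1, by rw [hx.2]; exact Finset.ne_of_mem_erase hj⟩)
    refine this.trans (A.mono () ?_)
    refine Finset.le_inf fun x hx => ?_
    refine (Finset.inf_le (hc1 x hx)).trans (Finset.inf_le ?_)
    simp [hx]

theorem full_valid (n : ℕ) (W : Type) [Nonempty W] [Fintype W] (h : Fintype.card W ≤ n) :
    (KFrame.mk W (fun _ _ _ => True) : KFrame Unit).ValidSet
      ({e_refl, e_trans, e_sym, eFun n} : Set (SPImp Unit)) := by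
  rw [frames_iff]
  refine ⟨⟨fun _ => trivial, fun _ => trivial, fun _ _ => trivial⟩, fun w => ⟨Set.finite_univ.subset (Set.subset_univ _), ?_⟩⟩
  have : {u : W | True} = Set.univ := by simp
  change Set.ncard {u : W | True} ≤ n
  rw [this, Set.ncard_univ, Nat.card_eq_fintype_card]
  exact h

theorem complete_aux (n : ℕ) (hn : 2 ≤ n) :
    IsCompleteLogic ({e_refl, e_trans, e_sym, eFun n} : Set (SPImp Unit)) := by
  rintro ⟨σ, τ⟩
  constructor
  · intro hK A hA v
    have h1 : ∀ a, a ≤ A.dia () a := fun a => hA e_refl (by simp) (fun _ => a)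
    have h2 : ∀ a, A.dia () (A.dia () a) ≤ A.dia () a :=
      fun a => hA e_trans (by simp) (fun _ => a)
    have h3 : ∀ a b, b ⊓ A.dia () a ≤ A.dia () (a ⊓ A.dia () b) :=
      fun a b => hA e_sym (by simp) (fun i => if i = 0 then a else b)
    have h4 : A.Valid (eFun n) := hA _ (by simp)
    change A.eval v σ ≤ A.eval v τ
    rw [eval_nf A h1 h2 h3, eval_nf A h1 h2 h3]
    have hE : ∀ W : Type, Equivalence (fun _ _ : W => True) := fun W =>
      ⟨fun _ => trivial, fun _ => trivial, fun _ _ => trivial⟩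
    refine le_inf (inf_le_left.trans (Finset.inf_mono ?_)) ?_
    · have := hK _ (full_valid n Bool (by simpa using hn))
        (fun x => {b | b = true → x ∈ (nf σ).1}) true
      simp only [truth_nf (KFrame.mk Bool (fun _ _ _ => True)) (hE Bool)] at this
      have := (this ⟨fun x hx _ => hx, fun S hS => ⟨false, trivial, fun x hx => by simp⟩⟩).1
      intro x hx
      exact this x hx rfl
    · rw [le_dl]
      intro Q hQ
      refine grow n A h4 v _ Q ?_ Q subset_rfl
      intro T hT hTn
      by_cases hex : ∃ S ∈ (nf σ).1 :: (nf σ).2, T ⊆ S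
      · obtain ⟨S, hS, hTS⟩ := hex
        have hm : A.dia () (S.inf v) ≤ A.dia () (T.inf v) := A.mono () (Finset.inf_mono hTS)
        refine le_trans ?_ hm
        rcases List.mem_cons.1 hS with rfl | hS
        · exact inf_le_left.trans (h1 _)
        · exact inf_le_right.trans ((le_dl A v _ _).1 le_rfl S hS)
      · exfalso
        push Not at hex
        have hex' : ∀ S ∈ (nf σ).1 :: (nf σ).2, ∃ t : T, ∀ x ∈ S, x ≠ t.1 := by
          intro S hS
          obtain ⟨t, ht, htS⟩ := Finset.not_subset.1 (hex S hS)
          exact ⟨⟨t, ht⟩, fun x hx h => htS ((show x = t from h) ▸ hx)⟩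
        obtain ⟨t0, ht0⟩ := hex' (nf σ).1 (by simp)
        have : Nonempty T := ⟨t0⟩
        have := hK _ (full_valid n T (by simpa using hTn)) (fun x => {t | x ≠ t.1}) t0
        simp only [truth_nf (KFrame.mk T (fun _ _ _ => True)) (hE T)] at this
        obtain ⟨u, -, hu⟩ := (this ⟨ht0, fun S hS => by
          obtain ⟨t, ht⟩ := hex' S (by simp [hS])
          exact ⟨t, trivial, ht⟩⟩).2 Q hQ
        exact hu u.1 (hT u.2) rfl
  · intro hS F hF
    rw [← valid_cmpl]
    exact hS _ fun ι hι => (valid_cmpl F ι).2 (hF ι hι)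

end Helpers

/-- For every `n ≥ 2`, the unimodal spi-logic `SPiⁿ_equiv` axiomatised
by `Ec_equiv ∪ {e_funⁿ}` is complete. Moreover, the frames validating
`Ec_equiv ∪ {e_funⁿ}` are exactly the frames whose relation is an equivalence
relation all of whose classes have at most `n` elements. -/
theorem stmt15 (n : ℕ) (hn : 2 ≤ n) :
    IsCompleteLogic ({e_refl, e_trans, e_sym, eFun n} : Set (SPImp Unit)) ∧
    (∀ F : KFrame Unit,
      F.ValidSet ({e_refl, e_trans, e_sym, eFun n} : Set (SPImp Unit)) ↔
        (Equivalence (F.rel ()) ∧ ∀ w : F.world,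
          {u : F.world | F.rel () w u}.Finite ∧
          {u : F.world | F.rel () w u}.ncard ≤ n)) := by
  exact ⟨complete_aux n hn, frames_iff n⟩
end

section
/- Neither the unimodal spi-logic axiomatised by {e_wcon} nor the unimodal spi-logic SPi_lin axiomatised by Ec_lin = {e_refl, e_trans, e_wcon} is complex: there is a finite SLO validating every member of Ec_lin (hence validating e_wcon) that admits no sp-embedding into F* for any frame F validating e_wcon (in particular, for no frame validating Ec_lin). -/
/-- `◇(p ∧ q) ∧ ◇(p ∧ r) → ◇(p ∧ ◇q ∧ ◇r)` (weak connectedness). -/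
def e_wcon : SPImp Unit :=
  ((((SP.var 0).and (SP.var 1)).d).and (((SP.var 0).and (SP.var 2)).d),
   ((SP.var 0).and (((SP.var 1).d).and ((SP.var 2).d))).d)

inductive El : Type
  | o | a | b | w | A | B | t

namespace El

def inf : El → El → El
  | o, _ => o
  | _, o => o
  | t, y => y
  | x, t => x
  | a, a => a
  | a, A => a
  | A, a => a
  | b, b => b
  | b, B => b
  | B, b => b
  | w, w => w
  | w, A => w
  | A, w => w
  | w, B => w
  | B, w => w
  | A, A => A
  | B, B => B
  | A, B => w
  | B, A => w
  | _, _ => o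

def dm : El → El
  | o => o
  | a => A
  | b => B
  | w => w
  | A => A
  | B => B
  | t => t

theorem inf_comm' (x y : El) : inf x y = inf y x := by cases x <;> cases y <;> rfl
theorem inf_idem' (x : El) : inf x x = x := by cases x <;> rfl
theorem inf_assoc' (x y z : El) : inf (inf x y) z = inf x (inf y z) := by
  cases x <;> cases y <;> cases z <;> rfl

instance instSL : SemilatticeInf El where
  le x y := inf x y = x
  inf := inf
  le_refl := inf_idem'
  le_trans x y z h1 h2 := by
    change inf x y = x at h1
    change inf y z = y at h2
    change inf x z = x
    rw [← h1, inf_assoc', h2]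
  le_antisymm x y h1 h2 := by
    change inf x y = x at h1
    change inf y x = y at h2
    rw [← h1, inf_comm', h2]
  inf_le_left x y := by
    change inf (inf x y) x = inf x y
    rw [inf_comm', ← inf_assoc', inf_idem']
  inf_le_right x y := by
    change inf (inf x y) y = inf x y
    rw [inf_assoc', inf_idem']
  le_inf x y z h1 h2 := by
    change inf x y = x at h1
    change inf x z = x at h2
    change inf x (inf y z) = x
    rw [← inf_assoc', h1, h2]

instance instTp : OrderTop El where
  top := t
  le_top x := by
    change inf x t = x
    cases x <;> rfl

theorem dm_mono (x y : El) (h : inf x y = x) : inf (dm x) (dm y) = dm x := by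
  cases x <;> cases y <;> first | rfl | (exact absurd h (by simp [inf]))

theorem wcon (p q r : El) :
    inf (inf (dm (inf p q)) (dm (inf p r))) (dm (inf p (inf (dm q) (dm r)))) =
      inf (dm (inf p q)) (dm (inf p r)) := by
  cases p <;> cases q <;> cases r <;> rfl

end El

def cexA : SLO Unit where
  carrier := El
  dia _ := El.dm
  mono _ x y h := El.dm_mono x y h

theorem cexA_finite : Finite cexA.carrier := by
  refine Set.finite_univ_iff.mp (Set.Finite.subset
    (Set.toFinite ({El.o, El.a, El.b, El.w, El.A, El.B, El.t} : Set El)) ?_)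
  intro x _
  cases x <;> simp

theorem cexA_wcon : cexA.Valid e_wcon := fun v => El.wcon (v 0) (v 1) (v 2)

theorem cexA_valid : cexA.ValidSet ({e_refl, e_trans, e_wcon} : Set (SPImp Unit)) := by
  rintro ι (rfl | rfl | rfl)
  · intro v
    change El.inf (v 0) (El.dm (v 0)) = v 0
    generalize v 0 = x
    change El at x
    cases x <;> rfl
  · intro v
    change El.inf (El.dm (El.dm (v 0))) (El.dm (v 0)) = El.dm (El.dm (v 0))
    generalize v 0 = x
    change El at x
    cases x <;> rfl
  · exact cexA_wcon

theorem frame_wcon (F : KFrame Unit) (h : F.Valid e_wcon) (x y z : F.world)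
    (hy : F.rel () x y) (hz : F.rel () x z) : F.rel () y z ∨ F.rel () z y := by
  have := h (fun n => if n = 0 then {y, z} else if n = 1 then {y} else {z}) x
  simp only [e_wcon, SP.d, KFrame.truth] at this
  obtain ⟨u, -, hu, ⟨y', hy', hy''⟩, ⟨z', hz', hz''⟩⟩ :=
    this ⟨⟨y, hy, by simp⟩, ⟨z, hz, by simp⟩⟩
  simp at hu hy'' hz''
  subst hy'' hz''
  rcases hu with rfl | rfl
  · exact Or.inl hz'
  · exact Or.inr hy'

theorem cexA_noemb (F : KFrame Unit) (h : F.Valid e_wcon)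
    (η : cexA.carrier → (KFrame.cmpl F).carrier) : ¬ IsSpEmbedding cexA (KFrame.cmpl F) η := by
  rintro ⟨hinj, -, hinf, hd⟩
  let f : El → Set F.world := η
  have hI : ∀ x y : El, f (El.inf x y) = f x ∩ f y := hinf
  have hD : ∀ (x : El) (u v : F.world), F.rel () u v → v ∈ f x → u ∈ f (El.dm x) := by
    intro x u v huv hv
    have : f (El.dm x) = {w | ∃ u ∈ f x, F.rel () w u} := hd () x
    rw [this]
    exact ⟨v, hv, huv⟩
  have hD' : ∀ (x : El) (u : F.world), u ∈ f (El.dm x) → ∃ v ∈ f x, F.rel () u v := by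
    intro x u hu
    have : f (El.dm x) = {w | ∃ u ∈ f x, F.rel () w u} := hd () x
    rw [this] at hu
    exact hu
  have hne : f El.w ≠ f El.o := fun e => by
    have : El.w = El.o := hinj e
    cases this
  apply hne
  apply Set.Subset.antisymm
  · intro x hx
    have hAB : x ∈ f El.A ∩ f El.B := by rw [← hI]; exact hx
    obtain ⟨y, hy, hxy⟩ := hD' El.a x hAB.1
    obtain ⟨z, hz, hxz⟩ := hD' El.b x hAB.2
    rcases frame_wcon F h x y z hxy hxz with k | k
    · have hyo : y ∈ f (El.inf El.a El.B) := by
        rw [hI]; exact ⟨hy, hD El.b y z k hz⟩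
      exact hD El.o x y hxy hyo
    · have hzo : z ∈ f (El.inf El.b El.A) := by
        rw [hI]; exact ⟨hz, hD El.a z y k hy⟩
      exact hD El.o x z hxz hzo
  · have := hI El.o El.w
    change f El.o = _ at this
    rw [this]
    exact Set.inter_subset_right

/-- Neither the unimodal spi-logic axiomatised by `{e_wcon}` nor
`SPi_lin` (axiomatised by `Ec_lin = {e_refl, e_trans, e_wcon}`) is complex:
there is a finite SLO validating every member of `Ec_lin` that admits no
sp-embedding into `F*` for any frame validating `e_wcon`. -/
theorem stmt16 :
    ¬ IsComplexLogic ({e_wcon} : Set (SPImp Unit)) ∧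
    ¬ IsComplexLogic ({e_refl, e_trans, e_wcon} : Set (SPImp Unit)) ∧
    ∃ A : SLO Unit, Finite A.carrier ∧
      A.ValidSet ({e_refl, e_trans, e_wcon} : Set (SPImp Unit)) ∧
      ∀ F : KFrame Unit, F.Valid e_wcon →
        ∀ η : A.carrier → (KFrame.cmpl F).carrier, ¬ IsSpEmbedding A (KFrame.cmpl F) η := by
  refine ⟨?_, ?_, cexA, cexA_finite, cexA_valid, cexA_noemb⟩
  · intro H
    obtain ⟨F, hF, η, hη⟩ := H cexA (by rintro ι rfl; exact cexA_wcon)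
    exact cexA_noemb F (hF _ rfl) η hη
  · intro H
    obtain ⟨F, hF, η, hη⟩ := H cexA cexA_valid
    exact cexA_noemb F (hF _ (Or.inr (Or.inr rfl))) η hη
end

section
/- The unimodal spi-logic SPi_lin axiomatised by Ec_lin = {e_refl, e_trans, e_wcon} is complete: for every sp-implication ι, Ec_lin ⊨_Kr ι if and only if Ec_lin ⊨_SLO ι. (The frames validating Ec_lin are exactly the linear quasiorders, i.e., the reflexive, transitive and weakly connected frames.) -/
namespace Lin17

abbrev Ax : Set (SPImp Unit) := {e_refl, e_trans, e_wcon}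

def vars : SP Unit → List ℕ
  | .var n => [n]
  | .top => []
  | .and φ ψ => vars φ ++ vars ψ
  | .dia _ _ => []

def conj : List ℕ → SP Unit
  | [] => .top
  | p :: P => .and (.var p) (conj P)

def cform : List (List ℕ) → SP Unit
  | [] => .top
  | P :: L => .dia () (.and (conj P) (cform L))

def paths : SP Unit → List (List (List ℕ))
  | .var _ => []
  | .top => []
  | .and φ ψ => paths φ ++ paths ψ
  | .dia _ ψ => [vars ψ] :: (paths ψ).map (vars ψ :: ·)

lemma truth_conj (F : KFrame Unit) (v : ℕ → Set F.world) (w : F.world) (P : List ℕ) :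
    F.truth v (conj P) w ↔ ∀ p ∈ P, w ∈ v p := by
  induction P with
  | nil => simp [conj, KFrame.truth]
  | cons p P ih => simp [conj, KFrame.truth, ih]

lemma le_conj (A : SLO Unit) (v : ℕ → A.carrier) (a : A.carrier) (P : List ℕ) :
    a ≤ A.eval v (conj P) ↔ ∀ p ∈ P, a ≤ v p := by
  induction P with
  | nil => simp [conj, SLO.eval]
  | cons p P ih => simp [conj, SLO.eval, ih]

lemma truth_vars (F : KFrame Unit) (v : ℕ → Set F.world) (τ : SP Unit) :
    ∀ w, F.truth v τ w → ∀ p ∈ vars τ, w ∈ v p := by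
  induction τ with
  | var n => intro w h p hp; simp [vars] at hp; subst hp; exact h
  | top => intro w h p hp; simp [vars] at hp
  | and φ ψ h1 h2 =>
    intro w h p hp
    simp only [vars, List.mem_append] at hp
    rcases hp with hp | hp
    · exact h1 w h.1 p hp
    · exact h2 w h.2 p hp
  | dia r φ _ => intro w h p hp; simp [vars] at hp

lemma eval_vars (A : SLO Unit) (v : ℕ → A.carrier) (τ : SP Unit) :
    ∀ p ∈ vars τ, A.eval v τ ≤ v p := by
  induction τ with
  | var n => intro p hp; simp [vars] at hp; subst hp; exact le_rfl
  | top => intro p hp; simp [vars] at hp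
  | and φ ψ h1 h2 =>
    intro p hp
    simp only [vars, List.mem_append] at hp
    rcases hp with hp | hp
    · exact inf_le_left.trans (h1 p hp)
    · exact inf_le_right.trans (h2 p hp)
  | dia r φ _ => intro p hp; simp [vars] at hp

lemma truth_paths (F : KFrame Unit) (v : ℕ → Set F.world) (τ : SP Unit) :
    ∀ w, F.truth v τ w → ∀ L ∈ paths τ, F.truth v (cform L) w := by
  induction τ with
  | var n => intro w h L hL; simp [paths] at hL
  | top => intro w h L hL; simp [paths] at hL
  | and φ ψ h1 h2 =>
    intro w h p hp
    simp only [paths, List.mem_append] at hp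
    rcases hp with hp | hp
    · exact h1 w h.1 p hp
    · exact h2 w h.2 p hp
  | dia r φ ih =>
    rintro w ⟨u, hu, h⟩ L hL
    have hc := (truth_conj F v u (vars φ)).2 (truth_vars F v φ u h)
    simp only [paths, List.mem_cons, List.mem_map] at hL
    rcases hL with rfl | ⟨L, hL, rfl⟩
    · exact ⟨u, hu, hc, trivial⟩
    · exact ⟨u, hu, hc, ih u h L hL⟩


lemma a_refl {A : SLO Unit} (hA : A.ValidSet Ax) (a : A.carrier) : a ≤ A.dia () a :=
  hA e_refl (by simp) (fun _ => a)

lemma a_trans {A : SLO Unit} (hA : A.ValidSet Ax) (a : A.carrier) :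
    A.dia () (A.dia () a) ≤ A.dia () a :=
  hA e_trans (by simp) (fun _ => a)

lemma a_wcon {A : SLO Unit} (hA : A.ValidSet Ax) (a b c : A.carrier) :
    A.dia () (a ⊓ b) ⊓ A.dia () (a ⊓ c) ≤ A.dia () (a ⊓ (A.dia () b ⊓ A.dia () c)) :=
  hA e_wcon (by simp) (fun n => if n = 0 then a else if n = 1 then b else c)

lemma cform_closed {A : SLO Unit} (hA : A.ValidSet Ax) (v : ℕ → A.carrier)
    (L : List (List ℕ)) : A.dia () (A.eval v (cform L)) ≤ A.eval v (cform L) := by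
  cases L with
  | nil => exact le_top
  | cons P L => exact a_trans hA _

lemma merge {A : SLO Unit} (hA : A.ValidSet Ax) (v : ℕ → A.carrier) (a P : A.carrier)
    (Ls : List (List (List ℕ))) (h0 : a ≤ A.dia () P)
    (h : ∀ L ∈ Ls, a ≤ A.dia () (P ⊓ A.eval v (cform L))) :
    ∃ X : A.carrier, A.dia () X ≤ X ∧ a ≤ A.dia () (P ⊓ X) ∧
      ∀ L ∈ Ls, X ≤ A.eval v (cform L) := by
  induction Ls with
  | nil => exact ⟨⊤, le_top, by simpa using h0, by simp⟩
  | cons L Ls ih =>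
    obtain ⟨X, hX, haX, hXL⟩ := ih (fun L hL => h L (List.mem_cons_of_mem _ hL))
    refine ⟨A.eval v (cform L) ⊓ X, ?_, ?_, ?_⟩
    · exact le_inf ((A.mono () inf_le_left).trans (cform_closed hA v L))
        ((A.mono () inf_le_right).trans hX)
    · refine (le_inf (h L List.mem_cons_self) haX).trans ((a_wcon hA _ _ _).trans (A.mono () ?_))
      exact inf_le_inf_left _ (inf_le_inf (cform_closed hA v L) hX)
    · intro L' hL'
      rcases List.mem_cons.1 hL' with rfl | hL'
      · exact inf_le_left
      · exact inf_le_right.trans (hXL _ hL')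

lemma le_of_paths {A : SLO Unit} (hA : A.ValidSet Ax) (v : ℕ → A.carrier) (τ : SP Unit) :
    ∀ a : A.carrier, (∀ p ∈ vars τ, a ≤ v p) → (∀ L ∈ paths τ, a ≤ A.eval v (cform L)) →
      a ≤ A.eval v τ := by
  induction τ with
  | var n => intro a h _; exact h n (by simp [vars])
  | top => intro a _ _; exact le_top
  | and φ ψ h1 h2 =>
    intro a hv hp
    exact le_inf
      (h1 a (fun p h => hv p (by simp [vars, h])) (fun p h => hp p (by simp [paths, h])))
      (h2 a (fun p h => hv p (by simp [vars, h])) (fun p h => hp p (by simp [paths, h])))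
  | dia r φ ih =>
    intro a _ hp
    obtain ⟨X, hX, haX, hXL⟩ := merge hA v a (A.eval v (conj (vars φ))) (paths φ)
      ((hp [vars φ] (by simp [paths])).trans (A.mono () inf_le_left))
      (fun L hL => hp (vars φ :: L) (by simp [paths, hL]))
    refine haX.trans (A.mono () (ih _ ?_ ?_))
    · exact (le_conj A v _ _).1 inf_le_left
    · exact fun L hL => inf_le_right.trans (hXL L hL)

lemma greedy {A : SLO Unit} (hA : A.ValidSet Ax) (v : ℕ → A.carrier) (a : A.carrier)
    (S : Set ℕ) (hS : ∀ p ∈ S, a ≤ v p) (L : List (List ℕ)) :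
    a ≤ A.eval v (cform L) ∨ ∃ P L', (P :: L') <:+ L ∧ (¬ ∀ p ∈ P, p ∈ S) ∧
      (a ≤ A.eval v (cform (P :: L')) → a ≤ A.eval v (cform L)) := by
  induction L with
  | nil => exact Or.inl le_top
  | cons P L ih =>
    by_cases hP : ∀ p ∈ P, p ∈ S
    · have key : a ≤ A.eval v (cform L) → a ≤ A.eval v (cform (P :: L)) := fun h =>
        (le_inf ((le_conj A v a P).2 fun p hp => hS p (hP p hp)) h).trans (a_refl hA _)
      rcases ih with h | ⟨P', L', hs, hn, hi⟩
      · exact Or.inl (key h)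
      · exact Or.inr ⟨P', L', hs.trans (List.suffix_cons _ _), hn, fun h => key (hi h)⟩
    · exact Or.inr ⟨P, L, List.suffix_rfl, hP, id⟩

def World (T : List (List ℕ)) : Type :=
  {x : List (List ℕ) × Set ℕ // x.1 <:+ T ∧ ∃ P L, x.1 = P :: L ∧ ¬ ∀ p ∈ P, p ∈ x.2}

def frm (T : List (List ℕ)) (w : World T) : KFrame Unit :=
  { world := World T
    instNonempty := ⟨w⟩
    rel := fun _ x y => y.1.1 <:+ x.1.1 }

def val (T : List (List ℕ)) (w : World T) : ℕ → Set (frm T w).world :=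
  fun p => {x : World T | p ∈ x.1.2}

lemma frm_fails (T : List (List ℕ)) (w : World T) (K : List (List ℕ)) :
    ∀ x : World T, x.1.1 <:+ K → ¬ (frm T w).truth (val T w) (cform K) x := by
  induction K with
  | nil =>
    intro x hx
    obtain ⟨P, L, h, _⟩ := x.2.2
    rw [h] at hx
    simp at hx
  | cons P K ih =>
    rintro x hx ⟨y, hy, hP, hK⟩
    have hy' : y.1.1 <:+ P :: K := List.IsSuffix.trans hy hx
    rcases List.suffix_cons_iff.1 hy' with h | h
    · obtain ⟨P', L, h', hn⟩ := y.2.2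
      rw [h] at h'
      obtain ⟨rfl, rfl⟩ := List.cons.inj h'
      exact hn ((truth_conj (frm T w) (val T w) y P).1 hP)
    · exact ih y h hK

lemma frm_main {A : SLO Unit} (hA : A.ValidSet Ax) (v : ℕ → A.carrier)
    (T : List (List ℕ)) (w : World T) (φ : SP Unit) :
    ∀ x : World T, (∀ p ∈ vars φ, p ∈ x.1.2) →
      (frm T w).truth (val T w) φ x ∨ A.eval v φ ≤ A.eval v (cform x.1.1) := by
  induction φ with
  | var n => intro x h; exact Or.inl (h n (by simp [vars]))
  | top => intro x h; exact Or.inl trivial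
  | and φ ψ h1 h2 =>
    intro x h
    rcases h1 x (fun p hp => h p (by simp [vars, hp])) with h1 | h1
    · rcases h2 x (fun p hp => h p (by simp [vars, hp])) with h2 | h2
      · exact Or.inl ⟨h1, h2⟩
      · exact Or.inr (inf_le_right.trans h2)
    · exact Or.inr (inf_le_left.trans h1)
  | dia r ψ ih =>
    intro x _
    have fin : A.eval v ψ ≤ A.eval v (cform x.1.1) →
        A.eval v (.dia r ψ) ≤ A.eval v (cform x.1.1) := fun h =>
      (A.mono () h).trans (cform_closed hA v _)
    rcases greedy hA v (A.eval v ψ) {p | p ∈ vars ψ} (eval_vars A v ψ) x.1.1 with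
      h | ⟨P, L, hs, hn, hi⟩
    · exact Or.inr (fin h)
    · let y : World T := ⟨(P :: L, {p | p ∈ vars ψ}), hs.trans x.2.1, P, L, rfl, hn⟩
      rcases ih y (fun p hp => hp) with h | h
      · exact Or.inl ⟨y, hs, h⟩
      · exact Or.inr (fin (hi h))

lemma frame_iff (F : KFrame Unit) : F.ValidSet Ax ↔
    (Reflexive (F.rel ()) ∧ Transitive (F.rel ()) ∧
      ∀ x y z : F.world, F.rel () x y → F.rel () x z →
        F.rel () y z ∨ F.rel () z y ∨ y = z) := by
  constructor
  · intro h
    refine ⟨?_, ?_, ?_⟩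
    · intro x
      obtain ⟨u, hu, hx⟩ := h e_refl (by simp) (fun _ => {x}) x rfl
      cases hx; exact hu
    · intro x y z hxy hyz
      obtain ⟨u, hu, hx⟩ := h e_trans (by simp) (fun _ => {z}) x ⟨y, hxy, z, hyz, rfl⟩
      cases hx; exact hu
    · intro x y z hxy hxz
      obtain ⟨u, hu, hp, ⟨a, ha, ha'⟩, ⟨b, hb, hb'⟩⟩ := h e_wcon (by simp)
        (fun n => if n = 0 then {y, z} else if n = 1 then {y} else {z}) x
        ⟨⟨y, hxy, Or.inl rfl, rfl⟩, ⟨z, hxz, Or.inr rfl, rfl⟩⟩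
      cases ha'; cases hb'
      rcases hp with rfl | hp
      · exact Or.inl hb
      · cases hp; exact Or.inr (Or.inl ha)
  · rintro ⟨hr, ht, hc⟩ ι hι
    rcases hι with rfl | rfl | rfl
    · intro v w h; exact ⟨w, hr w, h⟩
    · rintro v w ⟨a, ha, b, hb, h⟩; exact ⟨b, ht ha hb, h⟩
    · rintro v w ⟨⟨y, hy, hp, hq⟩, ⟨z, hz, hp', hr'⟩⟩
      rcases hc w y z hy hz with h | h | h
      · exact ⟨y, hy, hp, ⟨y, hr y, hq⟩, ⟨z, h, hr'⟩⟩
      · exact ⟨z, hz, hp', ⟨y, h, hq⟩, ⟨z, hr z, hr'⟩⟩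
      · subst h; exact ⟨y, hy, hp, ⟨y, hr y, hq⟩, ⟨y, hr y, hr'⟩⟩

lemma frm_valid (T : List (List ℕ)) (w : World T) : (frm T w).ValidSet Ax := by
  rw [frame_iff]
  refine ⟨fun x => List.suffix_rfl, fun x y z h1 h2 => List.IsSuffix.trans h2 h1, ?_⟩
  intro x y z _ _
  rcases List.suffix_or_suffix_of_suffix (Subtype.prop y).1 (Subtype.prop z).1 with h | h
  · exact Or.inr (Or.inl h)
  · exact Or.inl h

lemma chain_complete {A : SLO Unit} (hA : A.ValidSet Ax) (v : ℕ → A.carrier)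
    (σ : SP Unit) (T : List (List ℕ)) (h : KrCons Ax (σ, cform T)) :
    A.eval v σ ≤ A.eval v (cform T) := by
  rcases greedy hA v (A.eval v σ) {p | p ∈ vars σ} (eval_vars A v σ) T with
    h' | ⟨P, L, hs, hn, hi⟩
  · exact h'
  · let y : World T := ⟨(P :: L, {p | p ∈ vars σ}), hs, P, L, rfl, hn⟩
    rcases frm_main hA v T y σ y (fun p hp => hp) with h' | h'
    · exact absurd (h (frm T y) (frm_valid T y) (val T y) y h') (frm_fails T y T y hs)
    · exact hi h'

def bfrm : KFrame Unit := { world := Bool, rel := fun _ x y => x ≤ y }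

def bval (S : Set ℕ) : ℕ → Set bfrm.world := fun p => {x : Bool | x = true ∨ p ∈ S}

lemma b_true (S : Set ℕ) (φ : SP Unit) : bfrm.truth (bval S) φ true := by
  induction φ with
  | var n => exact Or.inl rfl
  | top => trivial
  | and φ ψ h1 h2 => exact ⟨h1, h2⟩
  | dia r φ h => exact ⟨true, le_refl (α := Bool) true, h⟩

lemma b_false (S : Set ℕ) (φ : SP Unit) (h : ∀ p ∈ vars φ, p ∈ S) :
    bfrm.truth (bval S) φ false := by
  induction φ with
  | var n => exact Or.inr (h n (by simp [vars]))
  | top => trivial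
  | and φ ψ h1 h2 =>
    exact ⟨h1 fun p hp => h p (by simp [vars, hp]), h2 fun p hp => h p (by simp [vars, hp])⟩
  | dia r φ _ => exact ⟨true, Bool.false_le true, b_true S φ⟩

lemma b_valid : bfrm.ValidSet Ax := by
  rw [frame_iff]
  refine ⟨fun x => le_refl (α := Bool) x, fun x y z h1 h2 => le_trans (α := Bool) h1 h2, ?_⟩
  intro x y z _ _
  rcases le_total (α := Bool) y z with h | h
  · exact Or.inl h
  · exact Or.inr (Or.inl h)

lemma vars_sub (σ τ : SP Unit) (h : KrCons Ax (σ, τ)) : ∀ p ∈ vars τ, p ∈ vars σ := by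
  intro p hp
  have h1 := h bfrm b_valid (bval {p | p ∈ vars σ}) false (b_false _ σ fun p hp => hp)
  rcases truth_vars bfrm _ τ _ h1 p hp with h2 | h2
  · cases h2
  · exact h2

lemma eval_cmpl (F : KFrame Unit) (v : ℕ → Set F.world) (φ : SP Unit) :
    ∀ w, w ∈ (show Set F.world from F.cmpl.eval v φ) ↔ F.truth v φ w := by
  induction φ with
  | var n => intro w; exact Iff.rfl
  | top => intro w; exact Iff.rfl
  | and φ ψ h1 h2 => intro w; exact and_congr (h1 w) (h2 w)
  | dia r φ ih =>
    intro w
    exact ⟨fun ⟨u, hu, hr⟩ => ⟨u, hr, (ih u).1 hu⟩, fun ⟨u, hr, hu⟩ => ⟨u, (ih u).2 hu, hr⟩⟩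

lemma cmpl_valid (F : KFrame Unit) (ι : SPImp Unit) : F.cmpl.Valid ι ↔ F.Valid ι := by
  constructor
  · intro h v w hw
    exact (eval_cmpl F v _ w).1 (h v ((eval_cmpl F v _ w).2 hw))
  · intro h v w hw
    exact (eval_cmpl F v _ w).2 (h v w ((eval_cmpl F v _ w).1 hw))

end Lin17

/-- `SPi_lin` (axiomatised by `Ec_lin = {e_refl, e_trans, e_wcon}`)
is complete. Moreover, the frames validating `Ec_lin` are exactly the linear
quasiorders, i.e. the reflexive, transitive and weakly connected frames. -/
theorem stmt17 :
    IsCompleteLogic ({e_refl, e_trans, e_wcon} : Set (SPImp Unit)) ∧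
    (∀ F : KFrame Unit,
      F.ValidSet ({e_refl, e_trans, e_wcon} : Set (SPImp Unit)) ↔
        (Reflexive (F.rel ()) ∧ Transitive (F.rel ()) ∧
          ∀ x y z : F.world, F.rel () x y → F.rel () x z →
            F.rel () y z ∨ F.rel () z y ∨ y = z)) := by
  refine ⟨?_, Lin17.frame_iff⟩
  intro ι
  constructor
  · intro h A hA v
    refine Lin17.le_of_paths hA v ι.2 _ ?_ ?_
    · exact fun p hp => Lin17.eval_vars A v ι.1 p (Lin17.vars_sub ι.1 ι.2 h p hp)
    · intro L hL
      exact Lin17.chain_complete hA v ι.1 L fun F hF v w hw =>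
        Lin17.truth_paths F v ι.2 w (h F hF v w hw) L hL
  · intro h F hF
    exact (Lin17.cmpl_valid F ι).1 (h F.cmpl fun κ hκ => (Lin17.cmpl_valid F κ).2 (hF κ hκ))
end
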